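/- arXiv:1112.5157 — 6 statements merged into one kernel-verified Lean document; each statement's English description precedes it below -/
import Mathlib

section
/- Let d > 6, let G be a connected d-regular graph such that G² is not complete, let R be a C region of G, and let v ∈ R satisfy deg₂(v) = 2 and N₂'(v) = {u}. Then every vertex of R is at distance at most 2 from u; that is, R ⊆ {u} ∪ N(u) ∪ N₂(u), and moreover R ⊆ G_v ∪ {u}, where G_v is the vertex set of the connected component of G − u containing v. -/
open SimpleGraph

variable {V : Type*}

/-- The set of vertices at distance exactly `i` from `v`. -/
def distSet (G : SimpleGraph V) (v : V) (i : ℕ) : Set V := {u | G.dist v u = i}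

/-- `deg₂ v` : the number of vertices at distance exactly 2 from `v`. -/
noncomputable def deg2 (G : SimpleGraph V) (v : V) : ℕ := (distSet G v 2).ncard

/-- `N₂'(v)` : vertices at distance 2 from `v` that are adjacent to a vertex at
distance 3 from `v`. -/
def N2' (G : SimpleGraph V) (v : V) : Set V :=
  {u | G.dist v u = 2 ∧ ∃ w, G.dist v w = 3 ∧ G.Adj u w}

/-- The square of `G` : an edge between `u` and `v` whenever `1 ≤ d(u,v) ≤ 2`. -/
def graphSquare (G : SimpleGraph V) : SimpleGraph V where
  Adj u v := 1 ≤ G.dist u v ∧ G.dist u v ≤ 2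
  symm := by
    constructor
    intro u v h
    rwa [SimpleGraph.dist_comm]
  loopless := by
    constructor
    intro v h
    simp [SimpleGraph.dist_self] at h

/-- `G` is `d`-regular : every vertex has exactly `d` neighbors. -/
def IsRegularGraph (G : SimpleGraph V) (d : ℕ) : Prop :=
  ∀ v, (G.neighborSet v).ncard = d

/-- The vertex set of the connected component of `G - u` containing `v` :
all vertices reachable from `v` by a walk avoiding `u`. -/
def compDel (G : SimpleGraph V) (u v : V) : Set V :=
  {w | ∃ p : G.Walk v w, u ∉ p.support}

/-- One step of the equivalence relation generating regions : both vertices are low degree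
(`deg₂ ≤ 3`) and they are within distance 2 of each other. -/
def regStep (G : SimpleGraph V) (a b : V) : Prop :=
  deg2 G a ≤ 3 ∧ deg2 G b ≤ 3 ∧ G.Reachable a b ∧ G.dist a b ≤ 2

/-- A region : an equivalence class of low-degree vertices under chains of `regStep`,
together with all neighbors of vertices of the class. -/
def IsRegion (G : SimpleGraph V) (R : Set V) : Prop :=
  ∃ x₀, deg2 G x₀ ≤ 3 ∧
    R = {y | Relation.ReflTransGen (regStep G) x₀ y} ∪
        {y | ∃ x, Relation.ReflTransGen (regStep G) x₀ x ∧ G.Adj x y}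


lemma aux_two {V : Type*} (G : SimpleGraph V) (hc : G.Connected) (a b : V) (h : G.dist a b ≤ 2) :
    a = b ∨ G.Adj a b ∨ ∃ m, G.Adj a m ∧ G.Adj m b := by
  obtain ⟨p, hp⟩ := hc.exists_walk_length_eq_dist a b
  rw [← hp] at h
  match p, h with
  | .nil, _ => exact Or.inl rfl
  | .cons h1 .nil, _ => exact Or.inr (Or.inl h1)
  | .cons h1 (.cons h2 .nil), _ => exact Or.inr (Or.inr ⟨_, h1, h2⟩)
  | .cons h1 (.cons h2 (.cons h3 q)), h => simp at h

lemma aux_le {V : Type*} (G : SimpleGraph V) (a b m : V) (h1 : G.Adj a m) (h2 : G.Adj m b) :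
    G.dist a b ≤ 2 := by
  have := G.dist_le (Walk.cons h1 (Walk.cons h2 Walk.nil))
  simpa using this

lemma aux_eq {V : Type*} (G : SimpleGraph V) (hc : G.Connected) (a b m : V) (h1 : G.Adj a m)
    (h2 : G.Adj m b) (hne : a ≠ b) (hna : ¬ G.Adj a b) : G.dist a b = 2 := by
  have h := aux_le G a b m h1 h2
  have h0 : G.dist a b ≠ 0 := fun h => hne (hc.dist_eq_zero_iff.1 h)
  have h1 : G.dist a b ≠ 1 := fun h => hna (dist_eq_one_iff_adj.1 h)
  omega

theorem stmt9 {V : Type*} [Fintype V] (G : SimpleGraph V) (d : ℕ) (hd : 6 < d)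
    (hconn : G.Connected) (hreg : IsRegularGraph G d) (hnotcomplete : graphSquare G ≠ ⊤)
    (R : Set V) (hR : IsRegion G R) (hC : ∀ x ∈ R, deg2 G x ≠ 1)
    (v u : V) (hvR : v ∈ R) (hv : deg2 G v = 2) (hN : N2' G v = {u}) :
    (∀ x ∈ R, G.dist u x ≤ 2) ∧ R ⊆ compDel G u v ∪ {u} := by
  classical
  have hu : u ∈ N2' G v := by rw [hN]; rfl
  obtain ⟨hu2, z, hz3, huz⟩ := hu
  set S : Set V := {x | G.dist v x ≤ 2 ∧ x ≠ u} with hS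
  have huS : u ∉ S := fun h => h.2 rfl
  have hvu : v ≠ u := by rintro rfl; simp at hu2
  have hvS : v ∈ S := ⟨by simp, hvu⟩
  have hzS : z ∉ S := fun h => by have := h.1; omega
  have d1 : ∀ {a b}, G.Adj a b → G.dist a b = 1 := fun h => dist_eq_one_iff_adj.2 h
  have hnS : ∀ x, G.Adj v x → x ∈ S := by
    intro x hx
    have := d1 hx
    refine ⟨by omega, ?_⟩
    rintro rfl; omega
  have F1 : ∀ x ∈ S, ∀ y, G.Adj x y → y ∈ S ∨ y = u := by
    intro x hx y hxy
    by_cases hyu : y = u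
    · exact Or.inr hyu
    by_cases hy2 : G.dist v y ≤ 2
    · exact Or.inl ⟨hy2, hyu⟩
    exfalso
    have t := hconn.dist_triangle (u := v) (v := x) (w := y)
    have := d1 hxy
    have := hx.1
    have hxN : x ∈ N2' G v := ⟨by omega, y, by omega, hxy⟩
    rw [hN] at hxN
    exact hx.2 hxN
  have F2 : S ⊆ compDel G u v := by
    intro x hx
    rcases aux_two G hconn v x hx.1 with h | h | ⟨m, h1, h2⟩
    · subst h; exact ⟨Walk.nil, by simpa using hvu.symm⟩
    · exact ⟨Walk.cons h Walk.nil, by simpa using ⟨hvu.symm, hx.2.symm⟩⟩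
    · exact ⟨Walk.cons h1 (Walk.cons h2 Walk.nil), by
        simpa using ⟨hvu.symm, (hnS m h1).2.symm, hx.2.symm⟩⟩
  have hcard : S.ncard = d + 2 := by
    have e : insert u S = insert v (G.neighborSet v ∪ distSet G v 2) := by
      ext x
      simp only [Set.mem_insert_iff, Set.mem_union, mem_neighborSet]
      constructor
      · rintro (rfl | hx)
        · exact Or.inr (Or.inr hu2)
        · by_cases h0 : G.dist v x = 0
          · exact Or.inl (hconn.dist_eq_zero_iff.1 h0).symm
          by_cases h1 : G.dist v x = 1
          · exact Or.inr (Or.inl (dist_eq_one_iff_adj.1 h1))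
          have := hx.1
          exact Or.inr (Or.inr (show G.dist v x = 2 by omega))
      · rintro (rfl | hx | hx)
        · exact Or.inr hvS
        · exact Or.inr (hnS x hx)
        · by_cases hxu : x = u
          · exact Or.inl hxu
          · exact Or.inr ⟨le_of_eq hx, hxu⟩
    have e1 := Set.ncard_insert_of_notMem huS (Set.toFinite S)
    have hv1 : v ∉ G.neighborSet v ∪ distSet G v 2 := by
      simp [distSet]
    have hdj : Disjoint (G.neighborSet v) (distSet G v 2) := by
      rw [Set.disjoint_left]
      intro x hx hx2
      have := d1 hx
      have : G.dist v x = 2 := hx2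
      omega
    have e2 := Set.ncard_insert_of_notMem hv1 (Set.toFinite _)
    rw [Set.ncard_union_eq hdj (Set.toFinite _) (Set.toFinite _), hreg v] at e2
    unfold deg2 at hv
    rw [e] at e1
    omega
  -- v lies in the class
  obtain ⟨x₀, hx₀, rfl⟩ := hR
  have hlow : ∀ y, Relation.ReflTransGen (regStep G) x₀ y → deg2 G y ≤ 3 := by
    intro y hy
    cases hy with
    | refl => exact hx₀
    | tail _ h => exact h.2.1
  have hvc : Relation.ReflTransGen (regStep G) x₀ v := by
    rcases hvR with h | ⟨x, h, hxv⟩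
    · exact h
    · refine h.tail ⟨hlow x h, by omega, hxv.reachable, ?_⟩
      have := d1 hxv
      omega
  have hsym : Symmetric (regStep G) := by
    rintro a b ⟨h1, h2, h3, h4⟩
    exact ⟨h2, h1, h3.symm, by rwa [dist_comm]⟩
  have hv0 : Relation.ReflTransGen (regStep G) v x₀ := by
    have key : ∀ y, Relation.ReflTransGen (regStep G) x₀ y →
        Relation.ReflTransGen (regStep G) y x₀ := by
      intro y hy
      induction hy with
      | refl => exact .refl
      | tail _ h ih => exact .head (hsym h) ih
    exact key v hvc
  have F3 : ∀ x ∈ S, G.dist u x ≤ 2 := by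
    intro x hx
    by_contra hcon
    obtain ⟨y, hvy, hyu⟩ : ∃ y, G.Adj v y ∧ G.Adj y u := by
      rcases aux_two G hconn v u hu2.le with h | h | h
      · exact absurd h hvu
      · have := d1 h; omega
      · exact h
    have hyS := hnS y hvy
    have hxu : ¬ G.Adj u x := fun h => by have := d1 h; omega
    have hxy : ¬ G.Adj y x := fun h => hcon (aux_le G u x y hyu.symm h)
    have hney : x ≠ y := by rintro rfl; exact hxu hyu.symm
    have hsub : G.neighborSet x ⊆ S \ {x, y} := by
      intro w hw
      refine ⟨?_, ?_⟩
      · rcases F1 x hx w hw with h | h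
        · exact h
        · subst h; exact absurd hw.symm hxu
      · rintro (rfl | rfl)
        · exact G.loopless.irrefl _ hw
        · exact hxy hw.symm
    have hc2 : (S \ {x, y}).ncard = d := by
      have := Set.ncard_diff_add_ncard_of_subset (s := {x, y}) (t := S)
        (by rintro w (rfl | rfl) <;> assumption) (Set.toFinite _)
      rw [Set.ncard_pair hney] at this
      omega
    have heq : G.neighborSet x = S \ {x, y} :=
      Set.eq_of_subset_of_ncard_le hsub (by rw [hc2, hreg x]) (Set.toFinite _)
    have hvx : v ≠ x := by rintro rfl; exact hxy hvy.symm
    have hxv : G.Adj x v := by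
      have : v ∈ G.neighborSet x := by
        rw [heq]
        refine ⟨hvS, ?_⟩
        rintro (h | h)
        · exact hvx h
        · exact hvy.ne h
      exact this
    apply hC x (Or.inr ⟨v, hvc, hxv.symm⟩)
    have : distSet G x 2 = {y} := by
      ext w
      simp only [distSet, Set.mem_setOf_eq, Set.mem_singleton_iff]
      constructor
      · intro hw
        rcases aux_two G hconn x w hw.le with h | h | ⟨m, h1, h2⟩
        · subst h; simp at hw
        · have := d1 h; omega
        · have hmS : m ∈ S := (hsub h1).1
          rcases F1 m hmS w h2 with h | h
          · by_contra hwy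
            have : w ∈ G.neighborSet x := by
              rw [heq]
              refine ⟨h, ?_⟩
              rintro (h' | h')
              · subst h'; simp at hw
              · exact hwy h'
            have := d1 this
            omega
          · subst h
            rw [dist_comm] at hw
            omega
      · rintro rfl
        exact aux_eq G hconn _ _ v hxv hvy hney (fun h => hxy h.symm)
    rw [deg2, this, Set.ncard_singleton]
  have hzu : z ≠ u := huz.ne'
  have F4 : 3 < deg2 G u := by
    have hdj : Disjoint S (insert z (G.neighborSet z) \ {u}) := by
      rw [Set.disjoint_left]
      rintro x hx ⟨(rfl | h), _⟩
      · exact hzS hx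
      · rcases F1 x hx z h.symm with h | h
        · exact hzS h
        · exact hzu h
    have hsub : S ∪ (insert z (G.neighborSet z) \ {u}) ⊆ G.neighborSet u ∪ distSet G u 2 := by
      have key : ∀ x, x ≠ u → G.dist u x ≤ 2 → x ∈ G.neighborSet u ∪ distSet G u 2 := by
        intro x hxu hx
        by_cases h0 : G.dist u x = 0
        · exact absurd (hconn.dist_eq_zero_iff.1 h0).symm hxu
        by_cases h1 : G.dist u x = 1
        · exact Or.inl (dist_eq_one_iff_adj.1 h1)
        exact Or.inr (show G.dist u x = 2 by omega)
      rintro x (hx | ⟨(rfl | h), hxu⟩)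
      · exact key x hx.2 (F3 x hx)
      · exact Or.inl huz
      · exact key x hxu (aux_le G u x z huz h)
    have h1 := Set.ncard_le_ncard hsub (Set.toFinite _)
    rw [Set.ncard_union_eq hdj (Set.toFinite _) (Set.toFinite _), hcard] at h1
    have h2 := Set.ncard_union_le (G.neighborSet u) (distSet G u 2)
    rw [hreg u] at h2
    have h3 := Set.ncard_diff_singleton_add_one
      (show u ∈ insert z (G.neighborSet z) from Or.inr huz.symm) (Set.toFinite _)
    have h4 := Set.ncard_insert_of_notMem (show z ∉ G.neighborSet z by simp) (Set.toFinite _)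
    rw [hreg z] at h4
    unfold deg2
    omega
  have hcross : ∀ p q, p ∈ S → q ∉ S → G.Adj u p → G.Adj u q → G.dist p q = 2 := by
    intro p q hp hq h1 h2
    refine aux_eq G hconn p q u h1.symm h2 ?_ ?_
    · rintro rfl; exact hq hp
    · intro h
      rcases F1 p hp q h with h | h
      · exact hq h
      · exact h2.ne h.symm
  have step : ∀ a b, a ∈ S → regStep G a b → b ∈ S := by
    rintro a b ha ⟨h1, h2, -, h4⟩
    have hbu : b ≠ u := by rintro rfl; omega
    rcases aux_two G hconn a b h4 with h | h | ⟨m, hm1, hm2⟩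
    · exact h ▸ ha
    · exact (F1 a ha b h).resolve_right hbu
    rcases F1 a ha m hm1 with hm | hm
    · exact (F1 m hm b hm2).resolve_right hbu
    subst hm
    by_contra hb
    have hA : (G.neighborSet m ∩ S).ncard ≤ deg2 G b := by
      refine Set.ncard_le_ncard ?_ (Set.toFinite _)
      intro p hp
      show G.dist b p = 2
      rw [dist_comm]
      exact hcross p b hp.2 hb hp.1 hm2
    have hB : (G.neighborSet m \ S).ncard ≤ deg2 G a := by
      refine Set.ncard_le_ncard ?_ (Set.toFinite _)
      intro p hp
      exact hcross a p ha hp.2 hm1.symm hp.1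
    have := Set.ncard_inter_add_ncard_diff_eq_ncard (G.neighborSet m) S (Set.toFinite _)
    rw [hreg m] at this
    omega
  have hcl : ∀ y, Relation.ReflTransGen (regStep G) x₀ y → y ∈ S := by
    intro y hy
    have h := hv0.trans hy
    clear hy
    induction h with
    | refl => exact hvS
    | tail _ h ih => exact step _ _ ih h
  have hRS : ∀ y ∈ {y | Relation.ReflTransGen (regStep G) x₀ y} ∪
        {y | ∃ x, Relation.ReflTransGen (regStep G) x₀ x ∧ G.Adj x y}, y ∈ S ∨ y = u := by
    rintro y (hy | ⟨x, hx, hxy⟩)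
    · exact Or.inl (hcl y hy)
    · exact F1 x (hcl x hx) y hxy
  refine ⟨?_, ?_⟩
  · intro x hx
    rcases hRS x hx with h | rfl
    · exact F3 x h
    · simp
  · intro x hx
    rcases hRS x hx with h | h
    · exact Or.inl (F2 h)
    · exact Or.inr h
end

section
/- Let d > 6, let G be a connected d-regular graph such that G² is not complete, let R be a C region of G, let v ∈ R satisfy deg₂(v) = 2 and N₂'(v) = {u}, and let G_v be the vertex set of the connected component of G − u containing v. Then R = G_v; in particular, u ∉ R. -/
open SimpleGraph

variable {V : Type*}

theorem aux_dist2 {V : Type*} (G : SimpleGraph V) (hconn : G.Connected) (x y : V) :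
    G.dist x y = 2 ↔ x ≠ y ∧ ¬ G.Adj x y ∧ ∃ m, G.Adj x m ∧ G.Adj m y := by
  constructor
  · intro h
    refine ⟨?_, ?_, ?_⟩
    · rintro rfl
      simp at h
    · intro ha
      rw [SimpleGraph.dist_eq_one_iff_adj.2 ha] at h
      omega
    · obtain ⟨p, hp⟩ := hconn.exists_walk_length_eq_dist x y
      rw [h] at hp
      match p, hp with
      | .cons h1 (.cons h2 .nil), _ => exact ⟨_, h1, h2⟩
  · rintro ⟨hne, hna, m, h1, h2⟩
    have hle : G.dist x y ≤ 2 := SimpleGraph.dist_le (.cons h1 (.cons h2 .nil))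
    have h0 : G.dist x y ≠ 0 := fun h => hne ((hconn.dist_eq_zero_iff).1 h)
    have h1 : G.dist x y ≠ 1 := fun h => hna (SimpleGraph.dist_eq_one_iff_adj.1 h)
    omega

theorem aux_le2 {V : Type*} (G : SimpleGraph V) (hconn : G.Connected) (x y : V)
    (h : G.dist x y ≤ 2) : x = y ∨ G.Adj x y ∨ ∃ m, G.Adj x m ∧ G.Adj m y := by
  have : G.dist x y = 0 ∨ G.dist x y = 1 ∨ G.dist x y = 2 := by omega
  rcases this with h | h | h
  · exact Or.inl ((hconn.dist_eq_zero_iff).1 h)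
  · exact Or.inr (Or.inl (SimpleGraph.dist_eq_one_iff_adj.1 h))
  · exact Or.inr (Or.inr ((aux_dist2 G hconn x y).1 h).2.2)

theorem aux_walk {V : Type*} (G : SimpleGraph V) (u : V) (A : V → Prop)
    (hcl : ∀ x y, A x → G.Adj x y → y ≠ u → A y) {x y : V} (p : G.Walk x y)
    (hx : A x) (hp : u ∉ p.support) : A y := by
  induction p with
  | nil => exact hx
  | @cons a b c h p ih =>
    simp only [SimpleGraph.Walk.support_cons, List.mem_cons, not_or] at hp
    refine ih (hcl _ _ hx h ?_) hp.2
    rintro rfl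
    exact hp.2 p.start_mem_support

/-- Let `d > 6`, `G` connected `d`-regular with `G²` not complete, `R` a
C region of `G` (a region with no vertex of `deg₂ = 1`), `v ∈ R` with `deg₂(v) = 2` and
`N₂'(v) = {u}`, and `G_v` the component of `G - u` containing `v`. Then `R = G_v`; in
particular `u ∉ R`. -/
theorem stmt10 {V : Type*} [Fintype V] (G : SimpleGraph V) (d : ℕ) (hd : 6 < d)
    (hconn : G.Connected) (hreg : IsRegularGraph G d) (hnotcomplete : graphSquare G ≠ ⊤)
    (R : Set V) (hR : IsRegion G R) (hC : ∀ x ∈ R, deg2 G x ≠ 1)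
    (v u : V) (hvR : v ∈ R) (hv : deg2 G v = 2) (hN : N2' G v = {u}) :
    R = compDel G u v ∧ u ∉ R := by
  classical
  set N : V → Finset V := fun x => Finset.univ.filter (fun y => G.Adj x y) with hNdef
  have memN : ∀ x y, y ∈ N x ↔ G.Adj x y := by intro x y; simp [hNdef]
  have cardN : ∀ x, (N x).card = d := by
    intro x
    rw [← hreg x, ← Set.ncard_coe_finset]
    congr 1
    ext y; simp [hNdef]
  set D : V → Finset V := fun x => Finset.univ.filter (fun y => G.dist x y = 2) with hDdef
  have memD : ∀ x y, y ∈ D x ↔ x ≠ y ∧ ¬ G.Adj x y ∧ ∃ m, G.Adj x m ∧ G.Adj m y := by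
    intro x y; rw [← aux_dist2 G hconn]; simp [hDdef]
  have cardD : ∀ x, (D x).card = deg2 G x := by
    intro x
    rw [deg2, ← Set.ncard_coe_finset]
    congr 1
    ext y; simp [hDdef, distSet]
  have hu : u ∈ N2' G v := by rw [hN]; rfl
  obtain ⟨huv, z, hz, huz⟩ := hu
  set A : Finset V := Finset.univ.filter (fun y => G.dist v y ≤ 2 ∧ y ≠ u) with hAdef
  have memA : ∀ y, y ∈ A ↔ G.dist v y ≤ 2 ∧ y ≠ u := by intro y; simp [hAdef]
  clear_value A
  have huA : u ∉ A := by simp [memA]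
  have hzA : z ∉ A := by rw [memA]; omega
  have hvA : v ∈ A := by
    rw [memA]
    refine ⟨by simp, ?_⟩
    rintro rfl
    simp at huv
  have hcl : ∀ x y, x ∈ A → G.Adj x y → y ≠ u → y ∈ A := by
    intro x y hx hxy hy
    rw [memA] at hx ⊢
    refine ⟨?_, hy⟩
    by_contra hlt
    have h1 := hconn.dist_triangle (u := v) (v := x) (w := y)
    rw [SimpleGraph.dist_eq_one_iff_adj.2 hxy] at h1
    have : x ∈ N2' G v := ⟨by omega, y, by omega, hxy⟩
    rw [hN] at this
    exact hx.2 this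
  have cardA : A.card = d + 2 := by
    have h : insert u A = insert v (N v ∪ D v) := by
      ext y
      simp only [Finset.mem_insert, Finset.mem_union, memA, memN]
      simp only [hDdef, Finset.mem_filter, Finset.mem_univ, true_and]
      rw [← SimpleGraph.dist_eq_one_iff_adj]
      constructor
      · rintro (rfl | ⟨h, -⟩)
        · exact Or.inr (Or.inr huv)
        · have : G.dist v y = 0 ∨ G.dist v y = 1 ∨ G.dist v y = 2 := by omega
          rcases this with h | h | h
          · exact Or.inl ((hconn.dist_eq_zero_iff).1 h).symm
          · exact Or.inr (Or.inl h)
          · exact Or.inr (Or.inr h)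
      · intro h
        by_cases hy : y = u
        · exact Or.inl hy
        · refine Or.inr ⟨?_, hy⟩
          rcases h with rfl | h | h
          · simp
          · omega
          · omega
    have h2 := congrArg Finset.card h
    rw [Finset.card_insert_of_notMem huA, Finset.card_insert_of_notMem,
      Finset.card_union_of_disjoint, cardN, cardD, hv] at h2
    · omega
    · rw [Finset.disjoint_left]
      intro y h1 h2
      exact ((memD _ _).1 h2).2.1 ((memN _ _).1 h1)
    · simp [memN, memD]
  set M : V → Finset V := fun x => (A.erase x) \ N x with hMdef
  have memM : ∀ x y, y ∈ M x ↔ y ≠ x ∧ y ∈ A ∧ ¬ G.Adj x y := by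
    intro x y; simp [hMdef, memN, and_assoc]
  have subN : ∀ x ∈ A, (N x).erase u ⊆ A.erase x := by
    intro x hx y hy
    rw [Finset.mem_erase, memN] at hy
    rw [Finset.mem_erase]
    exact ⟨hy.2.ne', hcl x y hx hy.2 hy.1⟩
  have cardM : ∀ x ∈ A, (M x).card + ((N x).erase u).card = d + 1 := by
    intro x hx
    have h1 : M x = A.erase x \ (N x).erase u := by
      ext y
      simp only [memM, Finset.mem_sdiff, Finset.mem_erase, memN]
      constructor
      · rintro ⟨a, b, c⟩; exact ⟨⟨a, b⟩, fun h => c h.2⟩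
      · rintro ⟨⟨a, b⟩, c⟩
        refine ⟨a, b, fun h => c ⟨?_, h⟩⟩
        rintro rfl; exact huA b
    rw [h1, Finset.card_sdiff_add_card_eq_card (subN x hx), Finset.card_erase_of_mem hx, cardA]
    rfl
  have cardNe1 : ∀ x, G.Adj x u → ((N x).erase u).card = d - 1 := by
    intro x h
    rw [Finset.card_erase_of_mem ((memN _ _).2 h), cardN]
  have cardNe0 : ∀ x, ¬ G.Adj x u → ((N x).erase u).card = d := by
    intro x h
    rw [Finset.erase_eq_of_notMem (fun h' => h ((memN _ _).1 h')), cardN]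
  have cardM1 : ∀ x ∈ A, ¬ G.Adj x u → (M x).card = 1 := by
    intro x hx h
    have h1 := cardM x hx
    rw [cardNe0 x h] at h1; omega
  have cardM2 : ∀ x ∈ A, G.Adj x u → (M x).card = 2 := by
    intro x hx h
    have h1 := cardM x hx
    rw [cardNe1 x h] at h1; omega
  set B : Finset V := A \ N u with hBdef
  have memB : ∀ y, y ∈ B ↔ y ∈ A ∧ ¬ G.Adj y u := by
    intro y; rw [G.adj_comm]; simp [hBdef, memN]
  -- parity
  have evenB : Even B.card := by
    let C : SimpleGraph V :=
      { Adj := fun x y => x ∈ A ∧ y ∈ A ∧ x ≠ y ∧ ¬ G.Adj x y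
        symm := ⟨fun x y h => ⟨h.2.1, h.1, h.2.2.1.symm, fun h' => h.2.2.2 h'.symm⟩⟩
        loopless := ⟨fun x h => h.2.2.1 rfl⟩ }
    have hdeg : ∀ x ∈ A, C.degree x = (M x).card := by
      intro x hx
      rw [← SimpleGraph.card_neighborFinset_eq_degree]
      congr 1
      ext y
      rw [SimpleGraph.mem_neighborFinset, memM]
      exact ⟨fun h => ⟨h.2.2.1.symm, h.2.1, h.2.2.2⟩, fun h => ⟨hx, h.2.1, h.1.symm, h.2.2⟩⟩
    have hdeg0 : ∀ x, x ∉ A → C.degree x = 0 := by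
      intro x hx
      rw [← SimpleGraph.card_neighborFinset_eq_degree, Finset.card_eq_zero]
      ext y
      rw [SimpleGraph.mem_neighborFinset]
      simp only [Finset.notMem_empty, iff_false]
      exact fun h => hx h.1
    have h := C.even_card_odd_degree_vertices
    convert h using 2
    ext x
    rw [memB, Finset.mem_filter]
    by_cases hx : x ∈ A
    · by_cases hxu : G.Adj x u
      · simp [hx, hxu, hdeg x hx, cardM2 x hx hxu]
      · rw [hdeg x hx, cardM1 x hx hxu]
        exact ⟨fun _ => ⟨Finset.mem_univ _, odd_one⟩, fun _ => ⟨hx, hxu⟩⟩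
    · rw [hdeg0 x hx]
      exact ⟨fun h => absurd h.1 hx, fun h => absurd h.2 (by decide)⟩
  set K : Finset V := A ∩ N u with hKdef
  set O : Finset V := N u \ A with hOdef
  have hBK : B.card + K.card = d + 2 := by
    rw [← cardA]; exact Finset.card_sdiff_add_card_inter A (N u)
  have hOK : O.card + K.card = d := by
    rw [← cardN u, hKdef, Finset.inter_comm]; exact Finset.card_sdiff_add_card_inter (N u) A
  have hO1 : 0 < O.card := Finset.card_pos.2 ⟨z, by simp [hOdef, memN, huz, hzA]⟩
  have hB4 : 4 ≤ B.card := by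
    obtain ⟨r, hr⟩ := evenB
    omega
  have memK : ∀ y, y ∈ K ↔ y ∈ A ∧ G.Adj y u := by
    intro y; rw [G.adj_comm]; simp [hKdef, memN]
  have memO : ∀ y, y ∈ O ↔ G.Adj u y ∧ y ∉ A := by
    intro y; simp [hOdef, memN]
  have hvB : v ∈ B := by
    rw [memB]
    refine ⟨hvA, fun h => ?_⟩
    rw [SimpleGraph.dist_eq_one_iff_adj.2 h] at huv
    omega
  -- deg2 of u
  have degu : 4 ≤ deg2 G u := by
    rw [← cardD]
    by_cases hk : 2 ≤ K.card
    · refine hB4.trans (Finset.card_le_card ?_)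
      intro x hx
      have hx' := (memB x).1 hx
      rw [memD]
      refine ⟨fun h => huA (h ▸ hx'.1), fun h => hx'.2 h.symm, ?_⟩
      obtain ⟨a, haK, haM⟩ : ∃ a ∈ K, a ∉ M x := by
        apply Finset.exists_mem_notMem_of_card_lt_card
        rw [cardM1 x hx'.1 hx'.2]; omega
      rw [memK] at haK
      rw [memM] at haM
      refine ⟨a, haK.2.symm, ?_⟩
      by_contra hn
      refine haM ⟨?_, haK.1, fun h => hn h.symm⟩
      rintro rfl
      exact hx'.2 haK.2
    · obtain ⟨-, -, a, hva, hau⟩ := (aux_dist2 G hconn v u).1 huv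
      have haA : a ∈ A := hcl v a hvA hva hau.ne
      have haK : a ∈ K := (memK a).2 ⟨haA, hau⟩
      have h1 : (N a).erase u ⊆ D u := by
        intro y hy
        have hy1 := subN a haA hy
        rw [Finset.mem_erase] at hy hy1
        rw [memN] at hy
        rw [memD]
        refine ⟨hy.1.symm, fun h => ?_, a, hau.symm, hy.2⟩
        have hyK : y ∈ K := (memK y).2 ⟨hy1.2, h.symm⟩
        exact hy1.1 (Finset.card_le_one.1 (by omega) y hyK a haK)
      have h2 := Finset.card_le_card h1
      rw [cardNe1 a hau] at h2
      omega
  have dega : ∀ a ∈ K, 4 ≤ deg2 G a := by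
    intro a ha
    have ha' := (memK a).1 ha
    rw [← cardD]
    have h1 : M a ∪ O ⊆ D a := by
      intro y hy
      rw [memD]
      rcases Finset.mem_union.1 hy with hy | hy
      · have hy' := (memM a y).1 hy
        refine ⟨hy'.1.symm, hy'.2.2, ?_⟩
        by_contra hno
        push Not at hno
        have hdis : Disjoint ((N a).erase u) ((N y).erase u) := by
          rw [Finset.disjoint_left]
          intro m h1 h2
          rw [Finset.mem_erase, memN] at h1 h2
          exact hno m h1.2 h2.2.symm
        have hsub : (N a).erase u ∪ (N y).erase u ⊆ A :=
          Finset.union_subset ((subN a ha'.1).trans (Finset.erase_subset _ _))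
            ((subN y hy'.2.1).trans (Finset.erase_subset _ _))
        have hc := Finset.card_le_card hsub
        rw [Finset.card_union_of_disjoint hdis, cardA] at hc
        have e1 := Finset.pred_card_le_card_erase (s := N a) (a := u)
        have e2 := Finset.pred_card_le_card_erase (s := N y) (a := u)
        rw [cardN] at e1 e2
        omega
      · rw [memO] at hy
        refine ⟨fun h => hy.2 (h ▸ ha'.1), fun h => hy.2 (hcl a y ha'.1 h hy.1.ne'), u, ha'.2, hy.1⟩
    have h2 := Finset.card_le_card h1
    rw [Finset.card_union_of_disjoint, cardM2 a ha'.1 ha'.2] at h2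
    · omega
    · rw [Finset.disjoint_left]
      intro y h1 h2
      exact ((memO y).1 h2).2 ((memM a y).1 h1).2.1
  have degb : ∀ y ∈ B, deg2 G y ≤ 3 := by
    intro y hy
    have hy' := (memB y).1 hy
    rw [← cardD]
    have h1 : D y ⊆ insert u (M y) := by
      intro x hx
      obtain ⟨h1, h2, m, h3, h4⟩ := (memD y x).1 hx
      rw [Finset.mem_insert, memM]
      by_cases hxu : x = u
      · exact Or.inl hxu
      · refine Or.inr ⟨h1.symm, ?_, h2⟩
        refine hcl m x (hcl y m hy'.1 h3 ?_) h4 hxu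
        rintro rfl; exact hy'.2 h3
    have h2 := Finset.card_le_card h1
    have h3 := Finset.card_insert_le u (M y)
    rw [cardM1 y hy'.1 hy'.2] at h3
    omega
  -- component
  have hcomp : compDel G u v = (A : Set V) := by
    ext y
    constructor
    · rintro ⟨p, hp⟩
      exact aux_walk G u (fun x => x ∈ A) hcl p hvA hp
    · intro hy
      have hy' := (memA y).1 hy
      have hvu : v ≠ u := ((memA v).1 hvA).2
      rcases aux_le2 G hconn v y hy'.1 with rfl | h | ⟨m, h1, h2⟩
      · exact ⟨.nil, by simpa using hvu.symm⟩
      · exact ⟨.cons h .nil, by simp [hvu.symm, hy'.2.symm]⟩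
      · refine ⟨.cons h1 (.cons h2 .nil), ?_⟩
        have : u ≠ m := by
          rintro rfl; exact ((memB v).1 hvB).2 h1
        simp [hvu.symm, hy'.2.symm, this]
  obtain ⟨x₀, hx₀, rfl⟩ := hR
  have hsymm : ∀ a b, Relation.ReflTransGen (regStep G) a b →
      Relation.ReflTransGen (regStep G) b a := by
    intro a b h
    induction h with
    | refl => exact .refl
    | tail _ h ih =>
      exact Relation.ReflTransGen.head
        ⟨h.2.1, h.1, h.2.2.1.symm, by rw [SimpleGraph.dist_comm]; exact h.2.2.2⟩ ih
  have hlow : ∀ x, Relation.ReflTransGen (regStep G) x₀ x → deg2 G x ≤ 3 := by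
    intro x h
    induction h with
    | refl => exact hx₀
    | tail _ h _ => exact h.2.1
  have hxv : Relation.ReflTransGen (regStep G) x₀ v := by
    rcases hvR with h | ⟨x, h, hxv⟩
    · exact h
    · refine h.tail ⟨hlow x h, by omega, hconn x v, ?_⟩
      rw [SimpleGraph.dist_eq_one_iff_adj.2 hxv]; omega
  have hclass : ∀ y, Relation.ReflTransGen (regStep G) x₀ y ↔ y ∈ B := by
    intro y
    constructor
    · intro h
      have h' := (hsymm _ _ hxv).trans h
      clear h
      induction h' with
      | refl => exact hvB
      | @tail b c _ h ih =>
        have ih' := (memB b).1 ih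
        have hcA : c ∈ A ∨ c = u := by
          by_cases hcu : c = u
          · exact Or.inr hcu
          · left
            rcases aux_le2 G hconn b c h.2.2.2 with rfl | h | ⟨m, h1, h2⟩
            · exact ih'.1
            · exact hcl _ _ ih'.1 h hcu
            · refine hcl m c (hcl b m ih'.1 h1 ?_) h2 hcu
              rintro rfl; exact ih'.2 h1
        have hc3 := h.2.1
        rcases hcA with hcA | rfl
        · rw [memB]
          refine ⟨hcA, fun hcu => ?_⟩
          have := dega c ((memK c).2 ⟨hcA, hcu⟩)
          omega
        · omega
    · intro hy
      exact hxv.tail ⟨by omega, degb y hy, hconn v y, ((memA y).1 ((memB y).1 hy).1).1⟩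
  have hfin : ({y | Relation.ReflTransGen (regStep G) x₀ y} ∪
        {y | ∃ x, Relation.ReflTransGen (regStep G) x₀ x ∧ G.Adj x y} : Set V) = (A : Set V) := by
    ext y
    simp only [hclass, Set.mem_union, Set.mem_setOf_eq, Finset.mem_coe]
    constructor
    · rintro (h | ⟨x, hx, hxy⟩)
      · exact ((memB y).1 h).1
      · have hx' := (memB x).1 hx
        refine hcl x y hx'.1 hxy ?_
        rintro rfl; exact hx'.2 hxy
    · intro hy
      by_cases hyB : y ∈ B
      · exact Or.inl hyB
      · right
        have hyu : G.Adj y u := by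
          by_contra h
          exact hyB ((memB y).2 ⟨hy, h⟩)
        obtain ⟨x, hxB, hxM⟩ : ∃ x ∈ B, x ∉ M y := by
          apply Finset.exists_mem_notMem_of_card_lt_card
          rw [cardM2 y hy hyu]; omega
        refine ⟨x, hxB, ?_⟩
        by_contra hn
        refine hxM ((memM y x).2 ⟨?_, ((memB x).1 hxB).1, fun h => hn h.symm⟩)
        rintro rfl; exact hyB hxB
  rw [hfin, hcomp]
  exact ⟨rfl, by simpa using huA⟩
end

section
/- Let G be a connected d-regular graph, let v be a vertex with deg₂(v) = 2 and N₂'(v) = {u}, and let G_v be the vertex set of the connected component of G − u containing v. Then |G_v| = d + 2, and |G_v \ N(u)| is even and at least 4 (equivalently, |N(u) ∩ G_v| ≤ d − 2 and has the same parity as d). -/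
open SimpleGraph

variable {V : Type*}

/-- Let `G` be connected `d`-regular, `v` a vertex with `deg₂(v) = 2`
and `N₂'(v) = {u}`, and `G_v` the component of `G - u` containing `v`. Then
`|G_v| = d + 2`, and `|G_v \ N(u)|` is even and at least 4. -/
theorem stmt12 {V : Type*} [Fintype V] (G : SimpleGraph V) (d : ℕ)
    (hconn : G.Connected) (hreg : IsRegularGraph G d)
    (v u : V) (hv : deg2 G v = 2) (hN : N2' G v = {u}) :
    (compDel G u v).ncard = d + 2 ∧
      Even ((compDel G u v \ G.neighborSet u).ncard) ∧
      4 ≤ (compDel G u v \ G.neighborSet u).ncard := by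
  classical
  have hu : u ∈ N2' G v := by rw [hN]; rfl
  obtain ⟨hu2, y, hy3, huy⟩ := hu
  have hN' : ∀ x w, G.dist v x = 2 → G.dist v w = 3 → G.Adj x w → x = u := by
    intro x w h1 h2 h3
    have : x ∈ N2' G v := ⟨h1, w, h2, h3⟩
    rw [hN] at this
    exact this
  have hdeg : ∀ a, (G.neighborFinset a).card = d := by
    intro a
    rw [← hreg a, ← Set.ncard_coe_finset]
    simp
  have hstep : ∀ a b, G.Adj a b → G.dist v b ≤ G.dist v a + 1 := by
    intro a b h
    have := hconn.dist_triangle (u := v) (v := a) (w := b)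
    rw [SimpleGraph.dist_eq_one_iff_adj.2 h] at this
    exact this
  set C : Finset V := Finset.univ.filter (fun w => G.dist v w ≤ 2 ∧ w ≠ u) with hC
  have memC : ∀ w, w ∈ C ↔ G.dist v w ≤ 2 ∧ w ≠ u := by intro w; simp [hC]
  have hclosed : ∀ a b, a ∈ C → G.Adj a b → b ≠ u → b ∈ C := by
    intro a b ha hab hb
    rw [memC] at ha ⊢
    refine ⟨?_, hb⟩
    by_contra hcon
    have := hstep a b hab
    exact ha.2 (hN' a b (by omega) (by omega) hab)
  have hvC : v ∈ C := by
    rw [memC]; refine ⟨by simp, ?_⟩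
    rintro rfl
    simp at hu2
  have hcomp : compDel G u v = (C : Set V) := by
    ext w
    constructor
    · rintro ⟨p, hp⟩
      have : ∀ (a b : V) (q : G.Walk a b), a ∈ C → u ∉ q.support → b ∈ C := by
        intro a b q
        induction q with
        | nil => intro h _; exact h
        | cons h q ih =>
          intro ha hq
          simp only [SimpleGraph.Walk.support_cons, List.mem_cons, not_or] at hq
          refine ih (hclosed _ _ ha h ?_) hq.2
          rintro rfl
          exact hq.2 q.start_mem_support
      exact this _ _ p hvC hp
    · intro hw
      obtain ⟨hw1, hw2⟩ := (memC w).1 hw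
      obtain ⟨p, hp⟩ := hconn.exists_walk_length_eq_dist v w
      refine ⟨p, ?_⟩
      intro hmem
      have h1 := SimpleGraph.dist_le (p.takeUntil u hmem)
      have h2 : (p.takeUntil u hmem).length + (p.dropUntil u hmem).length = p.length := by
        rw [← SimpleGraph.Walk.length_append, SimpleGraph.Walk.take_spec]
      have h3 : (p.dropUntil u hmem).length = 0 := by omega
      exact hw2 (SimpleGraph.Walk.eq_of_length_eq_zero h3).symm
  have hcardC : C.card = d + 2 := by
    have h2 : (Finset.univ.filter (fun w => G.dist v w = 2)).card = 2 := by
      refine Eq.trans ?_ hv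
      rw [deg2, ← Set.ncard_coe_finset]
      congr 1
      ext; simp [distSet]
    have hCe : C = (insert v (G.neighborFinset v ∪
        Finset.univ.filter (fun w => G.dist v w = 2))).erase u := by
      ext w
      rw [memC]
      simp only [Finset.mem_erase, Finset.mem_insert, Finset.mem_union,
        SimpleGraph.mem_neighborFinset, Finset.mem_filter, Finset.mem_univ, true_and,
        ← SimpleGraph.dist_eq_one_iff_adj]
      have : w = v ↔ G.dist v w = 0 := by
        rw [hconn.dist_eq_zero_iff]; exact eq_comm
      rw [this]
      constructor
      · rintro ⟨h, h'⟩; exact ⟨h', by omega⟩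
      · rintro ⟨h, h'⟩; exact ⟨by omega, h⟩
    rw [hCe, Finset.card_erase_of_mem (by simp [hu2]), Finset.card_insert_of_notMem (by simp),
      Finset.card_union_of_disjoint, h2, hdeg]
    · omega
    · rw [Finset.disjoint_left]
      intro a ha hb
      rw [SimpleGraph.mem_neighborFinset, ← SimpleGraph.dist_eq_one_iff_adj] at ha
      simp at hb
      omega
  have hS : compDel G u v \ G.neighborSet u = ((C \ G.neighborFinset u : Finset V) : Set V) := by
    rw [hcomp]; simp
  rw [hS, hcomp, Set.ncard_coe_finset, Set.ncard_coe_finset]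
  have hyC : y ∉ C := by rw [memC]; omega
  have hge : 3 ≤ (C \ G.neighborFinset u).card := by
    have h1 : C ∩ G.neighborFinset u ⊆ (G.neighborFinset u).erase y := by
      intro a ha
      rw [Finset.mem_inter] at ha
      rw [Finset.mem_erase]
      refine ⟨?_, ha.2⟩
      rintro rfl
      exact hyC ha.1
    have h2 := Finset.card_le_card h1
    have hyu : y ∈ G.neighborFinset u := by simpa using huy
    rw [Finset.card_erase_of_mem hyu, hdeg] at h2
    have h3 := Finset.card_sdiff_add_card_inter C (G.neighborFinset u)
    have h4 : 0 < d := by rw [← hdeg u]; exact Finset.card_pos.2 ⟨y, hyu⟩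
    omega
  have heven : Even (C \ G.neighborFinset u).card := by
    let H : SimpleGraph V :=
      { Adj := fun a b => a ≠ b ∧ ¬ G.Adj a b ∧ a ∈ C ∧ b ∈ C
        symm := ⟨fun a b h => ⟨h.1.symm, fun h' => h.2.1 h'.symm, h.2.2.2, h.2.2.1⟩⟩
        loopless := ⟨fun a h => h.1 rfl⟩ }
    have hev := H.even_card_odd_degree_vertices
    convert hev using 2
    ext a
    simp only [Finset.mem_sdiff, SimpleGraph.mem_neighborFinset, Finset.mem_filter,
      Finset.mem_univ, true_and]
    by_cases ha : a ∈ C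
    · have hnb : H.neighborFinset a = C \ insert a (G.neighborFinset a) := by
        ext b
        simp only [SimpleGraph.mem_neighborFinset, Finset.mem_sdiff, Finset.mem_insert, H]
        constructor
        · rintro ⟨h1, h2, h3, h4⟩
          exact ⟨h4, fun h => h.elim (fun h => h1 h.symm) h2⟩
        · rintro ⟨h1, h2⟩
          exact ⟨fun h => h2 (Or.inl h.symm), fun h => h2 (Or.inr h), ha, h1⟩
      have hins : (insert a (G.neighborFinset a)).card = d + 1 := by
        rw [Finset.card_insert_of_notMem (by simp), hdeg]
      have hau : a ≠ u := ((memC a).1 ha).2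
      rw [← SimpleGraph.card_neighborFinset_eq_degree, hnb]
      by_cases hua : G.Adj u a
      · have h1 : C \ insert a (G.neighborFinset a)
            = C \ (insert a (G.neighborFinset a)).erase u := by
          ext b
          have : b ∈ C → b ≠ u := fun h => ((memC b).1 h).2
          simp only [Finset.mem_sdiff, Finset.mem_erase]
          tauto
        have hsub : (insert a (G.neighborFinset a)).erase u ⊆ C := by
          intro b hb
          rw [Finset.mem_erase, Finset.mem_insert, SimpleGraph.mem_neighborFinset] at hb
          rcases hb with ⟨hb, rfl | h⟩
          · exact ha
          · exact hclosed _ _ ha h hb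
        rw [h1, Finset.card_sdiff_of_subset hsub, Finset.card_erase_of_mem
          (by simp [hua.symm]), hins, hcardC]
        have : d + 2 - (d + 1 - 1) = 2 := by omega
        rw [this]
        simp [hua]
      · have hsub : insert a (G.neighborFinset a) ⊆ C := by
          intro b hb
          rw [Finset.mem_insert, SimpleGraph.mem_neighborFinset] at hb
          rcases hb with rfl | h
          · exact ha
          · refine hclosed _ _ ha h ?_
            rintro rfl
            exact hua h.symm
        rw [Finset.card_sdiff_of_subset hsub, hins, hcardC]
        have : d + 2 - (d + 1) = 1 := by omega
        rw [this]
        simp [hua, ha]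
    · have : H.neighborFinset a = ∅ := by
        ext b
        simp [H, ha]
      rw [← SimpleGraph.card_neighborFinset_eq_degree, this]
      simp [ha]
  refine ⟨hcardC, heven, ?_⟩
  obtain ⟨k, hk⟩ := heven
  omega
end

section
/- Let d > 6 be odd, let G be a connected d-regular graph such that G² is not complete, and let T and T' be tails of G with T ∩ T' ≠ ∅. Then either G is a snake graph, or one of T and T' is contained in the other. -/
open SimpleGraph

variable {V : Type*}

/-- The complement of the induced subgraph of `G` on `S` is precisely a perfect matching
on `M ⊆ S` : there is a fixed-point-free involution `m` of `M` such that the non-adjacent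
pairs of distinct vertices inside `S` are exactly the matched pairs. -/
def ComplIsMatchingOn (G : SimpleGraph V) (S M : Set V) : Prop :=
  M ⊆ S ∧ ∃ m : V → V,
    (∀ x ∈ M, m x ∈ M ∧ m x ≠ x ∧ m (m x) = x) ∧
    (∀ a ∈ S, ∀ b ∈ S, a ≠ b → (¬ G.Adj a b ↔ (a ∈ M ∧ b = m a)))

/-- A tail with `k ≥ 1` segments in the graph `G` (for degree `d`). -/
structure Tail (G : SimpleGraph V) (d : ℕ) where
  /-- the vertex set of the tail -/
  carrier : Set V
  /-- the number of segments -/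
  k : ℕ
  /-- the segments `R₁, …, R_k` -/
  seg : ℕ → Set V
  /-- the vertex `v` of the first segment with `deg₂ v = 1` -/
  v0 : V
  /-- the vertex `u` with `N₂(v) = {u}` -/
  u0 : V
  /-- the endpoints `v_i` of the removed edges of later segments -/
  vt : ℕ → V
  /-- the endpoints `v_i'` of the removed edges of later segments -/
  vt' : ℕ → V
  /-- the unique vertex `w_T` of the tail having a neighbor outside the tail -/
  w : V
  /-- the unique neighbor `u_T` of `w_T` outside the tail -/
  uT : V
  k_pos : 1 ≤ k
  carrier_eq : carrier = ⋃ i ∈ Set.Icc 1 k, seg i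
  seg_disj : ∀ i ∈ Set.Icc 1 k, ∀ j ∈ Set.Icc 1 k, i ≠ j → Disjoint (seg i) (seg j)
  seg1 : seg 1 = {v0} ∪ G.neighborSet v0 ∪ {u0}
  seg1_card : (seg 1).ncard = d + 2
  deg2_v0 : deg2 G v0 = 1
  dist2_v0 : distSet G v0 2 = {u0}
  u0_nbrs : (G.neighborSet u0 ∩ G.neighborSet v0).ncard = d - 1
  compl_matching :
    ComplIsMatchingOn G ({v0} ∪ G.neighborSet v0) (G.neighborSet u0 ∩ G.neighborSet v0)
  seg_card : ∀ i ∈ Set.Icc 2 k, (seg i).ncard = d + 1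
  vt_mem : ∀ i ∈ Set.Icc 2 k, vt i ∈ seg i
  vt'_mem : ∀ i ∈ Set.Icc 2 k, vt' i ∈ seg i
  vt_ne : ∀ i ∈ Set.Icc 2 k, vt i ≠ vt' i
  seg_adj : ∀ i ∈ Set.Icc 2 k, ∀ a ∈ seg i, ∀ b ∈ seg i, a ≠ b →
    (G.Adj a b ↔ ({a, b} : Set V) ≠ {vt i, vt' i})
  inter_seg : ∀ i ∈ Set.Icc 1 k, ∀ j ∈ Set.Icc 1 k, i ≠ j → ∀ a ∈ seg i, ∀ b ∈ seg j,
    (G.Adj a b ↔ ((i = 1 ∧ j = 2 ∧ a = u0 ∧ b = vt 2) ∨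
                  (j = 1 ∧ i = 2 ∧ b = u0 ∧ a = vt 2) ∨
                  (i + 1 = j ∧ 2 ≤ i ∧ a = vt' i ∧ b = vt j) ∨
                  (j + 1 = i ∧ 2 ≤ j ∧ b = vt' j ∧ a = vt i)))
  w_eq_of_k_ge_two : 2 ≤ k → w = vt' k
  w_eq_of_k_eq_one : k = 1 → w = u0
  w_mem : w ∈ carrier
  uT_not_mem : uT ∉ carrier
  w_adj_uT : G.Adj w uT
  w_unique_out : ∀ b, G.Adj w b → b ∉ carrier → b = uT
  others_in : ∀ a ∈ carrier, a ≠ w → ∀ b, G.Adj a b → b ∈ carrier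

/-- A tail is proper if it is not contained in a strictly larger tail. -/
def IsProperTail (G : SimpleGraph V) (d : ℕ) (t : Tail G d) : Prop :=
  ∀ t' : Tail G d, t.carrier ⊆ t'.carrier → t.carrier = t'.carrier

/-- A snake graph : a connected `d`-regular graph which is the disjoint union of two tails,
the only edge joining them being `w_T w_{T'}`. -/
def IsSnake (G : SimpleGraph V) (d : ℕ) : Prop :=
  G.Connected ∧ IsRegularGraph G d ∧
  ∃ t t' : Tail G d,
    Disjoint t.carrier t'.carrier ∧
    t.carrier ∪ t'.carrier = Set.univ ∧
    t.uT = t'.w ∧ t'.uT = t.w ∧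
    (∀ a ∈ t.carrier, ∀ b ∈ t'.carrier, G.Adj a b → a = t.w ∧ b = t'.w)

theorem aux_avoid {V : Type*} (S : Set V) (l : List V) (h : l.length < S.ncard) :
    ∃ c ∈ S, c ∉ l := by
  classical
  have h1 : ((l.toFinset : Finset V) : Set V).ncard < S.ncard := by
    rw [Set.ncard_coe_finset]
    exact lt_of_le_of_lt (List.toFinset_card_le l) h
  obtain ⟨c, hc, hc'⟩ := Set.exists_mem_notMem_of_ncard_lt_ncard h1
  exact ⟨c, hc, by simpa using hc'⟩

theorem aux_cross {V : Type*} (G : SimpleGraph V) (hconn : G.Connected) (S : Set V)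
    (x y : V) (hx : x ∈ S) (hy : y ∉ S) : ∃ a ∈ S, ∃ b, b ∉ S ∧ G.Adj a b := by
  obtain ⟨p⟩ := hconn.preconnected x y
  obtain ⟨e, -, h1, h2⟩ := p.exists_boundary_dart S hx hy
  exact ⟨e.fst, h1, e.snd, h2, e.adj⟩

theorem aux_common {V : Type*} (G : SimpleGraph V) (d : ℕ) (hd : 6 < d) (t : Tail G d)
    (j : ℕ) (hj : j ∈ Set.Icc 1 t.k) (a b : V) (ha : a ∈ t.seg j) (hb : b ∈ t.seg j)
    (hab : a ≠ b) (x y : V) : ∃ c, G.Adj a c ∧ G.Adj c b ∧ c ≠ x ∧ c ≠ y := by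
  by_cases hj1 : j = 1
  · subst hj1
    obtain ⟨hM, m, hm, hS⟩ := t.compl_matching
    have key : ∀ b ∈ t.seg 1, t.u0 ≠ b →
        ∃ c, G.Adj t.u0 c ∧ G.Adj c b ∧ c ≠ x ∧ c ≠ y := by
      intro b hb hab
      obtain ⟨c, hc, hcl⟩ := aux_avoid (G.neighborSet t.u0 ∩ G.neighborSet t.v0)
        [b, m b, x, y] (by rw [t.u0_nbrs]; simp; omega)
      simp only [List.mem_cons, List.not_mem_nil, or_false, not_or] at hcl
      obtain ⟨h1, h2, h3, h4⟩ := hcl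
      refine ⟨c, hc.1, ?_, h3, h4⟩
      have hb' : b ∈ ({t.v0} ∪ G.neighborSet t.v0 : Set V) := by
        rw [t.seg1] at hb
        rcases hb with hb | hb
        · exact hb
        · exact absurd hb.symm hab
      by_contra hn
      exact h2 ((hS b hb' c (hM hc) (Ne.symm h1)).1 (fun h => hn h.symm)).2
    by_cases hau : a = t.u0
    · subst hau
      exact key b hb hab
    by_cases hbu : b = t.u0
    · subst hbu
      obtain ⟨c, h1, h2, h3, h4⟩ := key a ha (Ne.symm hab)
      exact ⟨c, h2.symm, h1.symm, h3, h4⟩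
    obtain ⟨c, hc, hcl⟩ := aux_avoid (t.seg 1)
        [t.u0, a, m a, b, m b, x, y] (by rw [t.seg1_card]; simp; omega)
    simp only [List.mem_cons, List.not_mem_nil, or_false, not_or] at hcl
    obtain ⟨h0, h1, h2, h3, h4, h5, h6⟩ := hcl
    have mem' : ∀ z ∈ t.seg 1, z ≠ t.u0 → z ∈ ({t.v0} ∪ G.neighborSet t.v0 : Set V) := by
      intro z hz hzu
      rw [t.seg1] at hz
      rcases hz with hz | hz
      · exact hz
      · exact absurd hz hzu
    refine ⟨c, ?_, ?_, h5, h6⟩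
    · by_contra hn
      exact h2 ((hS a (mem' a ha hau) c (mem' c hc h0) (Ne.symm h1)).1 hn).2
    · by_contra hn
      exact h4 ((hS b (mem' b hb hbu) c (mem' c hc h0) (Ne.symm h3)).1
        (fun h => hn h.symm)).2
  · have hj2 : j ∈ Set.Icc 2 t.k := ⟨by have := hj.1; omega, hj.2⟩
    obtain ⟨c, hc, hcl⟩ := aux_avoid (t.seg j)
        [a, b, t.vt j, t.vt' j, x, y] (by rw [t.seg_card j hj2]; simp; omega)
    simp only [List.mem_cons, List.not_mem_nil, or_false, not_or] at hcl
    obtain ⟨h1, h2, h3, h4, h5, h6⟩ := hcl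
    have hne : ∀ z, ({z, c} : Set V) ≠ {t.vt j, t.vt' j} := by
      intro z h
      have : c ∈ ({t.vt j, t.vt' j} : Set V) := h ▸ (by simp)
      rcases this with h | h
      · exact h3 h
      · exact h4 h
    exact ⟨c, (t.seg_adj j hj2 a ha c hc (Ne.symm h1)).2 (hne a),
      ((t.seg_adj j hj2 b hb c hc (Ne.symm h2)).2 (hne b)).symm, h5, h6⟩

/-- edges leaving a tail -/
theorem aux_edge {V : Type*} {G : SimpleGraph V} {d : ℕ} (t : Tail G d) (a b : V)
    (ha : a ∈ t.carrier) (hb : b ∉ t.carrier) (h : G.Adj a b) : a = t.w ∧ b = t.uT := by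
  have h1 : a = t.w := by
    by_contra hn
    exact hb (t.others_in a ha hn b h)
  subst h1
  exact ⟨rfl, t.w_unique_out b h hb⟩

theorem aux_conn {V : Type*} (G : SimpleGraph V) (hconn : G.Connected) (d : ℕ) (t : Tail G d)
    (S : Set V) (x y : V) (hx : x ∈ t.carrier) (hxS : x ∈ S) (hy : y ∈ t.carrier) (hyS : y ∉ S) :
    ∃ a ∈ t.carrier, ∃ b ∈ t.carrier, a ∈ S ∧ b ∉ S ∧ G.Adj a b := by
  by_cases hw : t.w ∈ S
  · obtain ⟨a, ha, b, hb, hadj⟩ := aux_cross G hconn (t.carrier \ S) y x ⟨hy, hyS⟩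
      (fun h => h.2 hxS)
    have hbt : b ∈ t.carrier := by
      by_contra hn
      have := (aux_edge t a b ha.1 hn hadj).1
      exact ha.2 (this ▸ hw)
    exact ⟨b, hbt, a, ha.1, by by_contra hn; exact hb ⟨hbt, hn⟩, ha.2, hadj.symm⟩
  · obtain ⟨a, ha, b, hb, hadj⟩ := aux_cross G hconn (t.carrier ∩ S) x y ⟨hx, hxS⟩
      (fun h => hyS h.2)
    have hbt : b ∈ t.carrier := by
      by_contra hn
      have := (aux_edge t a b ha.1 hn hadj).1
      exact hw (this ▸ ha.2)
    exact ⟨a, ha.1, b, hbt, ha.2, fun h => hb ⟨hbt, h⟩, hadj⟩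

/-- links between consecutive segments -/
theorem aux_link {V : Type*} {G : SimpleGraph V} {d : ℕ} (t : Tail G d) (i : ℕ)
    (hi : 1 ≤ i) (hik : i + 1 ≤ t.k) :
    ∃ a ∈ t.seg i, G.Adj a (t.vt (i + 1)) ∧ (2 ≤ i → a = t.vt' i) ∧ (i = 1 → a = t.u0) := by
  have hv : t.vt (i + 1) ∈ t.seg (i + 1) := t.vt_mem _ ⟨by omega, hik⟩
  by_cases h1 : i = 1
  · subst h1
    have hu : t.u0 ∈ t.seg 1 := by rw [t.seg1]; simp
    refine ⟨t.u0, hu, ?_, by omega, fun _ => rfl⟩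
    rw [t.inter_seg 1 ⟨by omega, by omega⟩ 2 ⟨by omega, by omega⟩ (by omega) _ hu _ hv]
    simp
  · have hu : t.vt' i ∈ t.seg i := t.vt'_mem _ ⟨by omega, by omega⟩
    refine ⟨t.vt' i, hu, ?_, fun _ => rfl, by omega⟩
    rw [t.inter_seg i ⟨by omega, by omega⟩ (i + 1) ⟨by omega, by omega⟩ (by omega) _ hu _ hv]
    right; right; left
    exact ⟨rfl, by omega, rfl, rfl⟩

theorem aux_seg_eq {V : Type*} {G : SimpleGraph V} {d : ℕ} (t : Tail G d) (i j : ℕ)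
    (hi : i ∈ Set.Icc 1 t.k) (hj : j ∈ Set.Icc 1 t.k) (x : V) (hx : x ∈ t.seg i)
    (hx' : x ∈ t.seg j) : i = j := by
  by_contra hn
  exact Set.disjoint_left.1 (t.seg_disj i hi j hj hn) hx hx'

/-- Let `d > 6` be odd and `G` connected `d`-regular with `G²` not
complete. If `T` and `T'` are tails of `G` with nonempty intersection, then either `G` is
a snake graph or one of `T`, `T'` is contained in the other. -/
theorem stmt13 {V : Type*} [Fintype V] (G : SimpleGraph V) (d : ℕ) (hd : 6 < d)
    (hodd : Odd d) (hconn : G.Connected) (hreg : IsRegularGraph G d)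
    (hnotcomplete : graphSquare G ≠ ⊤)
    (t t' : Tail G d) (hne : (t.carrier ∩ t'.carrier).Nonempty) :
    IsSnake G d ∨ t.carrier ⊆ t'.carrier ∨ t'.carrier ⊆ t.carrier := by
  by_cases hs1 : t.carrier ⊆ t'.carrier
  · exact Or.inr (Or.inl hs1)
  by_cases hs2 : t'.carrier ⊆ t.carrier
  · exact Or.inr (Or.inr hs2)
  left
  obtain ⟨x0, hx0, hx0'⟩ := hne
  obtain ⟨y1, hy1, hy1'⟩ := Set.not_subset.1 hs1
  obtain ⟨y2, hy2, hy2'⟩ := Set.not_subset.1 hs2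
  -- the two tails cover
  have hcov : ∀ z, z ∉ t.carrier → z ∈ t'.carrier := by
    by_contra hcon
    push Not at hcon
    obtain ⟨z, hz, hz'⟩ := hcon
    obtain ⟨a, ha, b, hb, ha', hb', hab⟩ :=
      aux_conn G hconn d t t'.carrier x0 y1 hx0 hx0' hy1 hy1'
    obtain ⟨a2, ha2, b2, hb2, ha2', hb2', hab2⟩ :=
      aux_conn G hconn d t' t.carrier x0 y2 hx0' hx0 hy2 hy2'
    obtain ⟨p, hp, q, hq, hpq⟩ := aux_cross G hconn (t.carrier ∪ t'.carrier) x0 z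
      (Or.inl hx0) (by rintro (h | h); exacts [hz h, hz' h])
    have e1 := aux_edge t' a b ha' hb' hab
    have e2 := aux_edge t a2 b2 ha2' hb2' hab2
    rcases hp with hp | hp
    · have e3 := aux_edge t p q hp (fun h => hq (Or.inl h)) hpq
      exact hq (Or.inr (by rw [e3.2, ← e2.2]; exact hb2))
    · have e3 := aux_edge t' p q hp (fun h => hq (Or.inr h)) hpq
      exact hq (Or.inl (by rw [e3.2, ← e1.2]; exact hb))
  -- crossing edges
  have hcr : ∀ a b, a ∉ t.carrier → b ∈ t.carrier → G.Adj a b → a = t.uT ∧ b = t.w :=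
    fun a b ha hb h => (aux_edge t b a hb ha h.symm).symm
  -- each segment is monochromatic
  have hmono : ∀ j ∈ Set.Icc 1 t'.k, ∀ a ∈ t'.seg j, ∀ b ∈ t'.seg j,
      a ∉ t.carrier → b ∉ t.carrier := by
    intro j hj a ha b hb hac hbc
    obtain ⟨c, h1, h2, h3, h4⟩ := aux_common G d hd t' j hj a b ha hb
      (by rintro rfl; exact hac hbc) t.uT t.w
    by_cases hc : c ∈ t.carrier
    · exact h4 (hcr a c hac hc h1).2
    · exact h3 (hcr c b hc hbc h2).1
  have hmem : ∀ z, z ∈ t'.carrier ↔ ∃ j ∈ Set.Icc 1 t'.k, z ∈ t'.seg j := by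
    intro z
    rw [t'.carrier_eq]
    simp
  have hwseg : t'.w ∈ t'.seg t'.k := by
    by_cases h : t'.k = 1
    · rw [t'.w_eq_of_k_eq_one h, h, t'.seg1]; simp
    · have hk := t'.k_pos
      rw [t'.w_eq_of_k_ge_two (by omega)]
      exact t'.vt'_mem _ ⟨by omega, le_rfl⟩
  -- outside segments
  let P : ℕ → Prop := fun j => ∃ a ∈ t'.seg j, a ∉ t.carrier
  have hPall : ∀ j ∈ Set.Icc 1 t'.k, P j → ∀ b ∈ t'.seg j, b ∉ t.carrier := by
    rintro j hj ⟨a, ha, hac⟩ b hb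
    exact hmono j hj a ha b hb hac
  have hnP : ∀ j, ¬ P j → ∀ b ∈ t'.seg j, b ∈ t.carrier := by
    intro j hj b hb
    by_contra hn
    exact hj ⟨b, hb, hn⟩
  -- upward change
  have hup : ∀ j, 1 ≤ j → j + 1 ≤ t'.k → ¬ P j → P (j + 1) → t.uT = t'.vt (j + 1) := by
    intro j h1 h2 hn hp
    obtain ⟨a, ha, hadj, -⟩ := aux_link t' j h1 h2
    have hv : t'.vt (j + 1) ∈ t'.seg (j + 1) := t'.vt_mem _ ⟨by omega, h2⟩
    exact (hcr _ _ (hPall _ ⟨by omega, h2⟩ hp _ hv) (hnP _ hn a ha) hadj.symm).1.symm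
  have hdown : ∀ j, 1 ≤ j → j + 1 ≤ t'.k → P j → ¬ P (j + 1) →
      t.uT ∈ t'.seg j ∧ (2 ≤ j → t.uT = t'.vt' j) ∧ (j = 1 → t.uT = t'.u0) ∧
      t.w ∈ t'.seg (j + 1) := by
    intro j h1 h2 hp hn
    obtain ⟨a, ha, hadj, h3, h4⟩ := aux_link t' j h1 h2
    have hv : t'.vt (j + 1) ∈ t'.seg (j + 1) := t'.vt_mem _ ⟨by omega, h2⟩
    obtain ⟨e1, e2⟩ := hcr _ _ (hPall _ ⟨by omega, by omega⟩ hp _ ha) (hnP _ hn _ hv) hadj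
    subst e1
    exact ⟨ha, h3, h4, e2 ▸ hv⟩
  -- existence of upward change
  have hupex : ∀ n j, 1 ≤ j → ¬ P j → P (j + n) → ∃ l, j ≤ l ∧ l < j + n ∧ ¬ P l ∧ P (l + 1) := by
    intro n
    induction n with
    | zero => intro j _ h1 h2; exact absurd h2 h1
    | succ n ih =>
      intro j hj h1 h2
      by_cases h : P (j + n)
      · obtain ⟨l, h3, h4, h5⟩ := ih j hj h1 h
        exact ⟨l, h3, by omega, h5⟩
      · exact ⟨j + n, by omega, by omega, h, h2⟩
  obtain ⟨jx, hjx, hjxm⟩ := (hmem x0).1 hx0'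
  have hPx : ¬ P jx := fun h => hPall _ hjx h _ hjxm hx0
  have hlast : ¬ P t'.k := by
    intro hp
    have hkk : t'.k ∈ Set.Icc 1 t'.k := ⟨t'.k_pos, le_rfl⟩
    have hw := hPall _ hkk hp _ hwseg
    have hu : t'.uT ∈ t.carrier := by
      by_contra h
      exact t'.uT_not_mem (hcov _ h)
    obtain ⟨e1, e2⟩ := hcr _ _ hw hu t'.w_adj_uT
    obtain ⟨l, h1, h2, h3, h4⟩ := hupex (t'.k - jx) jx hjx.1 hPx
      (by rwa [Nat.add_sub_cancel' hjx.2])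
    have h5 := hup l (le_trans hjx.1 h1) (by have := hjx.2; omega) h3 h4
    have hlk : l + 1 ∈ Set.Icc 2 t'.k := ⟨by have := hjx.1; omega, by have := hjx.2; omega⟩
    have hlk1 : l + 1 ∈ Set.Icc 1 t'.k := ⟨by omega, hlk.2⟩
    have h6 : l + 1 = t'.k := aux_seg_eq t' _ _ hlk1 hkk t.uT
      (h5 ▸ t'.vt_mem _ hlk) (e1 ▸ hwseg)
    have h7 : t'.w = t'.vt' t'.k := t'.w_eq_of_k_ge_two (by have := hlk.1; omega)
    apply t'.vt_ne _ hlk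
    rw [← h5, ← e1, h7, h6]
  -- there is an outside segment; take the end of the maximal one
  obtain ⟨jy, hjy, hjym⟩ := (hmem y2).1 hy2
  have hPy : P jy := ⟨y2, hjym, hy2'⟩
  have hdex : ∀ n, P (jy) → ¬ P (jy + n) → ∃ l, jy ≤ l ∧ l < jy + n ∧ P l ∧ ¬ P (l + 1) := by
    intro n
    induction n with
    | zero => intro h1 h2; exact absurd h1 h2
    | succ n ih =>
      intro h1 h2
      by_cases h : P (jy + n)
      · exact ⟨jy + n, by omega, by omega, h, h2⟩
      · obtain ⟨l, h3, h4, h5⟩ := ih h1 h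
        exact ⟨l, h3, by omega, h5⟩
  obtain ⟨i, hi1, hi2, hPi, hPi1⟩ := hdex (t'.k - jy) hPy
    (by rwa [Nat.add_sub_cancel' hjy.2])
  have hi1' : 1 ≤ i := le_trans hjy.1 hi1
  have hik : i + 1 ≤ t'.k := by have := hjy.2; omega
  obtain ⟨huseg, hu2, hu1, hwseg1⟩ := hdown i hi1' hik hPi hPi1
  have hnoup : ∀ l, 1 ≤ l → l + 1 ≤ t'.k → ¬ P l → P (l + 1) → False := by
    intro l h1 h2 h3 h4
    have h5 := hup l h1 h2 h3 h4
    have hlk : l + 1 ∈ Set.Icc 2 t'.k := ⟨by omega, h2⟩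
    have h6 : l + 1 = i := aux_seg_eq t' _ _ ⟨by omega, h2⟩ ⟨hi1', by omega⟩ t.uT
      (h5 ▸ t'.vt_mem _ hlk) huseg
    apply t'.vt_ne _ hlk
    rw [← h5, h6]
    exact hu2 (by omega)
  have hPle : ∀ j, 1 ≤ j → j ≤ i → P j := by
    intro j h1 h2
    by_contra hn
    obtain ⟨l, h3, h4, h5, h6⟩ := hupex (i - j) j h1 hn (by rwa [Nat.add_sub_cancel' h2])
    exact hnoup l (by omega) (by omega) h5 h6
  have hPgt : ∀ j, i < j → j ≤ t'.k → ¬ P j := by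
    intro j h1 h2 hp
    obtain ⟨l, h3, h4, h5, h6⟩ := hupex (j - (i + 1)) (i + 1) (by omega) hPi1
      (by rwa [Nat.add_sub_cancel' (by omega : i + 1 ≤ j)])
    exact hnoup l (by omega) (by omega) h5 h6
  have hC : (t.carrier)ᶜ = ⋃ j ∈ Set.Icc 1 i, t'.seg j := by
    ext z
    simp only [Set.mem_compl_iff, Set.mem_iUnion, exists_prop]
    constructor
    · intro hz
      obtain ⟨j, hj, hjz⟩ := (hmem z).1 (hcov z hz)
      refine ⟨j, ⟨hj.1, ?_⟩, hjz⟩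
      by_contra hn
      exact hPgt j (by omega) hj.2 ⟨z, hjz, hz⟩
    · rintro ⟨j, hj, hjz⟩
      exact hPall j ⟨hj.1, by have := hj.2; omega⟩ (hPle j hj.1 hj.2) z hjz
  have sub1 : ∀ {j}, j ∈ Set.Icc 1 i → j ∈ Set.Icc 1 t'.k :=
    fun h => ⟨h.1, by have := h.2; omega⟩
  have sub2 : ∀ {j}, j ∈ Set.Icc 2 i → j ∈ Set.Icc 2 t'.k :=
    fun h => ⟨h.1, by have := h.2; omega⟩
  let s : Tail G d :=
    { carrier := (t.carrier)ᶜ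
      k := i
      seg := t'.seg
      v0 := t'.v0
      u0 := t'.u0
      vt := t'.vt
      vt' := t'.vt'
      w := t.uT
      uT := t.w
      k_pos := hi1'
      carrier_eq := hC
      seg_disj := fun a ha b hb => t'.seg_disj a (sub1 ha) b (sub1 hb)
      seg1 := t'.seg1
      seg1_card := t'.seg1_card
      deg2_v0 := t'.deg2_v0
      dist2_v0 := t'.dist2_v0
      u0_nbrs := t'.u0_nbrs
      compl_matching := t'.compl_matching
      seg_card := fun a ha => t'.seg_card a (sub2 ha)
      vt_mem := fun a ha => t'.vt_mem a (sub2 ha)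
      vt'_mem := fun a ha => t'.vt'_mem a (sub2 ha)
      vt_ne := fun a ha => t'.vt_ne a (sub2 ha)
      seg_adj := fun a ha => t'.seg_adj a (sub2 ha)
      inter_seg := fun a ha b hb => t'.inter_seg a (sub1 ha) b (sub1 hb)
      w_eq_of_k_ge_two := hu2
      w_eq_of_k_eq_one := hu1
      w_mem := t.uT_not_mem
      uT_not_mem := fun h => h t.w_mem
      w_adj_uT := t.w_adj_uT.symm
      w_unique_out := fun b hb hbc => (hcr _ b t.uT_not_mem (not_not.1 hbc) hb).2
      others_in := fun a ha hne b hb hbc => hne (hcr a b ha hbc hb).1 }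
  refine ⟨hconn, hreg, t, s, disjoint_compl_right, Set.union_compl_self _, rfl, rfl, ?_⟩
  intro a ha b hb hab
  exact aux_edge t a b ha hb hab
end

section
/- Let d > 6 be odd, let G be a connected d-regular graph such that G² is not complete, and suppose G is not a snake graph. Let R = T₁ ∪ ⋯ ∪ T_m and R' = T'₁ ∪ ⋯ ∪ T'_{m'}, where {T₁, …, T_m} and {T'₁, …, T'_{m'}} are each maximal collections of proper tails of G whose members all have the same outside attachment vertex (u_{T₁} = ⋯ = u_{T_m}, and u_{T'₁} = ⋯ = u_{T'_{m'}}). If R ∩ R' ≠ ∅, then R = R'. -/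
open SimpleGraph

variable {V : Type*}

theorem aux_conn_s14 {V : Type*} {G : SimpleGraph V} (hc : G.Connected) (Z : Set V)
    (h : ∀ a b, G.Adj a b → a ∈ Z → b ∈ Z) {x : V} (hx : x ∈ Z) (y : V) : y ∈ Z := by
  obtain ⟨p⟩ := hc.preconnected x y
  induction p with
  | nil => exact hx
  | cons hadj p ih => exact ih (h _ _ hadj hx)

theorem aux_seg1 {V : Type*} [Finite V] {G : SimpleGraph V} {d : ℕ} (hd : 6 < d)
    (hreg : IsRegularGraph G d) (t : Tail G d) (S : Set V) (p q : V)
    (hcut : ∀ a b, G.Adj a b → a ∈ S → b ∉ S → a = p ∧ b = q) (hv : t.v0 ∈ S) :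
    t.seg 1 ⊆ S := by
  obtain ⟨hM, m, hm1, hm2⟩ := t.compl_matching
  have h1 : G.neighborSet t.v0 ⊆ S := by
    intro y hy
    by_contra hyS
    obtain ⟨hp, hq⟩ := hcut _ _ hy hv hyS
    have hsub : G.neighborSet t.v0 ⊆ {y, m y} := by
      intro x hx
      by_cases hxy : x = y
      · left; exact hxy
      right
      have hxS : x ∈ S := by
        by_contra hxS
        exact hxy ((hcut _ _ hx hv hxS).2.trans hq.symm)
      have hnadj : ¬ G.Adj y x := by
        intro hadj
        have := (hcut _ _ hadj.symm hxS hyS).1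
        rw [this, ← hp] at hx
        exact G.loopless.irrefl _ hx
      exact ((hm2 y (Or.inr hy) x (Or.inr hx) (Ne.symm hxy)).1 hnadj).2
    have h2 := Set.ncard_le_ncard hsub (Set.toFinite _)
    have h3 := Set.ncard_insert_le y {m y}
    rw [Set.ncard_singleton] at h3
    rw [hreg t.v0] at h2
    omega
  have h2 : t.u0 ∈ S := by
    by_contra hu
    have hsub : (G.neighborSet t.u0 ∩ G.neighborSet t.v0) ⊆ {p} := by
      intro x hx
      exact (hcut _ _ (G.symm.symm _ _ hx.1) (h1 hx.2) hu).1
    have h2 := Set.ncard_le_ncard hsub (Set.toFinite _)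
    rw [t.u0_nbrs, Set.ncard_singleton] at h2
    omega
  rw [t.seg1]
  rintro x ((hx | hx) | hx)
  · rw [hx]; exact hv
  · exact h1 hx
  · rw [hx]; exact h2

theorem aux_seg {V : Type*} [Finite V] {G : SimpleGraph V} {d : ℕ} (hd : 6 < d)
    (hreg : IsRegularGraph G d) (t : Tail G d) (S : Set V) (p q : V)
    (hcut : ∀ a b, G.Adj a b → a ∈ S → b ∉ S → a = p ∧ b = q)
    (i : ℕ) (h1 : 1 ≤ i) (hk : i ≤ t.k) :
    t.seg i ⊆ S ∨ t.seg i ⊆ Sᶜ := by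
  rcases Nat.eq_or_lt_of_le h1 with h | h
  · subst h
    by_cases hv : t.v0 ∈ S
    · exact Or.inl (aux_seg1 hd hreg t S p q hcut hv)
    · right
      refine aux_seg1 hd hreg t Sᶜ q p ?_ hv
      intro a b hab ha hb
      exact (hcut b a hab.symm (not_not.1 hb) ha).symm
  · have hi : i ∈ Set.Icc 2 t.k := ⟨h, hk⟩
    by_contra hcon
    push Not at hcon
    obtain ⟨hc1, hc2⟩ := hcon
    obtain ⟨b0, hb0, hb0S⟩ := Set.not_subset.1 hc1
    obtain ⟨a0, ha0, ha0S⟩ := Set.not_subset.1 hc2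
    have ha0S : a0 ∈ S := not_not.1 ha0S
    have key : ∀ a ∈ t.seg i, ∀ b ∈ t.seg i, a ∈ S → b ∉ S →
        (a = p ∧ b = q) ∨ ((a = t.vt i ∨ a = t.vt' i) ∧ (b = t.vt i ∨ b = t.vt' i)) := by
      intro a ha b hb haS hbS
      by_cases hadj : G.Adj a b
      · exact Or.inl (hcut a b hadj haS hbS)
      · right
        have hne : a ≠ b := fun e => hbS (e ▸ haS)
        have he : ({a, b} : Set V) = {t.vt i, t.vt' i} := by
          by_contra hne2
          exact hadj ((t.seg_adj i hi a ha b hb hne).2 hne2)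
        have e1 : a ∈ ({t.vt i, t.vt' i} : Set V) := he ▸ Set.mem_insert _ _
        have e2 : b ∈ ({t.vt i, t.vt' i} : Set V) := he ▸ Set.mem_insert_of_mem _ rfl
        exact ⟨e1, e2⟩
    have hs : t.seg i ⊆ {p, q, t.vt i, t.vt' i} := by
      intro x hx
      simp only [Set.mem_insert_iff, Set.mem_singleton_iff]
      by_cases hxS : x ∈ S
      · rcases key x hx b0 hb0 hxS hb0S with h | h <;> tauto
      · rcases key a0 ha0 x hx ha0S hxS with h | h <;> tauto
    have h2 := Set.ncard_le_ncard hs (Set.toFinite _)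
    have h3 := Set.ncard_insert_le p {q, t.vt i, t.vt' i}
    have h4 := Set.ncard_insert_le q {t.vt i, t.vt' i}
    have h5 := Set.ncard_insert_le (t.vt i) {t.vt' i}
    rw [Set.ncard_singleton] at h5
    rw [t.seg_card i hi] at h2
    omega

theorem aux_mem {V : Type*} {G : SimpleGraph V} {d : ℕ} (t : Tail G d) (x : V) :
    x ∈ t.carrier ↔ ∃ i, 1 ≤ i ∧ i ≤ t.k ∧ x ∈ t.seg i := by
  rw [t.carrier_eq]
  simp only [Set.mem_iUnion, Set.mem_Icc, exists_prop, and_assoc]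

theorem aux_wk {V : Type*} {G : SimpleGraph V} {d : ℕ} (t : Tail G d) : t.w ∈ t.seg t.k := by
  have := t.k_pos
  by_cases h : t.k = 1
  · rw [t.w_eq_of_k_eq_one h, h, t.seg1]; right; rfl
  · rw [t.w_eq_of_k_ge_two (by omega)]
    exact t.vt'_mem _ ⟨by omega, le_refl _⟩

theorem aux_uniq {V : Type*} {G : SimpleGraph V} {d : ℕ} (t : Tail G d) {x : V} {i j : ℕ}
    (hi : 1 ≤ i) (hik : i ≤ t.k) (hj : 1 ≤ j) (hjk : j ≤ t.k)
    (h1 : x ∈ t.seg i) (h2 : x ∈ t.seg j) : i = j := by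
  by_contra hne
  exact Set.disjoint_left.1 (t.seg_disj i ⟨hi, hik⟩ j ⟨hj, hjk⟩ hne) h1 h2

/-- exit vertex of the `i`-th segment -/
noncomputable def auxX {V : Type*} {G : SimpleGraph V} {d : ℕ} (t : Tail G d) (i : ℕ) : V :=
  if i = 1 then t.u0 else t.vt' i

theorem auxX_mem {V : Type*} {G : SimpleGraph V} {d : ℕ} (t : Tail G d) (i : ℕ)
    (h1 : 1 ≤ i) (hk : i ≤ t.k) : auxX t i ∈ t.seg i := by
  unfold auxX
  split_ifs with h
  · rw [h, t.seg1]; right; rfl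
  · exact t.vt'_mem _ ⟨by omega, hk⟩

theorem aux_link_s14 {V : Type*} {G : SimpleGraph V} {d : ℕ} (t : Tail G d) (i j : ℕ)
    (h1 : 1 ≤ i) (hij : i < j) (hk : j ≤ t.k) (a b : V) (ha : a ∈ t.seg i) (hb : b ∈ t.seg j) :
    G.Adj a b ↔ (j = i + 1 ∧ a = auxX t i ∧ b = t.vt (i + 1)) := by
  rw [t.inter_seg i ⟨h1, by omega⟩ j ⟨by omega, hk⟩ (by omega) a ha b hb]
  unfold auxX
  constructor
  · rintro (⟨rfl, rfl, h, h'⟩ | ⟨h, h', -⟩ | ⟨rfl, h, h', h''⟩ | ⟨h, -⟩)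
    · simp [h, h']
    · omega
    · rw [if_neg (by omega)]; exact ⟨rfl, h', h''⟩
    · omega
  · rintro ⟨rfl, h, h'⟩
    split_ifs at h with hi
    · subst hi; left; exact ⟨rfl, rfl, h, h'⟩
    · right; right; left; exact ⟨rfl, by omega, h, h'⟩

theorem aux_step {V : Type*} {G : SimpleGraph V} {d : ℕ} (t : Tail G d) (i : ℕ)
    (h1 : 1 ≤ i) (hk : i < t.k) (l : ℕ) (hl : 1 ≤ l) (hli : l ≤ i) (a b : V) (ha : a ∈ t.seg l)
    (hab : G.Adj a b) :
    (∃ j, 1 ≤ j ∧ j ≤ i ∧ b ∈ t.seg j) ∨ (a = auxX t i ∧ b = t.vt (i + 1)) := by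
  have hne : a ≠ t.w := by
    intro e
    have := aux_uniq t hl (by omega) t.k_pos le_rfl ha (e ▸ aux_wk t)
    omega
  have hb := t.others_in a ((aux_mem t a).2 ⟨l, hl, by omega, ha⟩) hne b hab
  obtain ⟨j, hj1, hjk, hbj⟩ := (aux_mem t b).1 hb
  by_cases hji : j ≤ i
  · exact Or.inl ⟨j, hj1, hji, hbj⟩
  · right
    obtain ⟨e, ea, eb⟩ := (aux_link_s14 t l j hl (by omega) hjk a b ha hbj).1 hab
    have : l = i := by omega
    subst this
    exact ⟨ea, eb⟩

theorem aux_pmem {V : Type*} (s : ℕ → Set V) (i : ℕ) (x : V) :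
    x ∈ (⋃ j ∈ Set.Icc 1 i, s j) ↔ ∃ j, 1 ≤ j ∧ j ≤ i ∧ x ∈ s j := by
  simp only [Set.mem_iUnion, Set.mem_Icc, exists_prop, and_assoc]

/-- The first `i` segments of a tail form a tail. -/
noncomputable def auxPre {V : Type*} {G : SimpleGraph V} {d : ℕ} (t : Tail G d) (i : ℕ)
    (h1 : 1 ≤ i) (hk : i < t.k) : Tail G d where
  carrier := ⋃ j ∈ Set.Icc 1 i, t.seg j
  k := i
  seg := t.seg
  v0 := t.v0
  u0 := t.u0
  vt := t.vt
  vt' := t.vt'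
  w := auxX t i
  uT := t.vt (i + 1)
  k_pos := h1
  carrier_eq := rfl
  seg_disj := fun a ha b hb => t.seg_disj a ⟨ha.1, by have := ha.2; omega⟩ b
    ⟨hb.1, by have := hb.2; omega⟩
  seg1 := t.seg1
  seg1_card := t.seg1_card
  deg2_v0 := t.deg2_v0
  dist2_v0 := t.dist2_v0
  u0_nbrs := t.u0_nbrs
  compl_matching := t.compl_matching
  seg_card := fun a ha => t.seg_card a ⟨ha.1, by have := ha.2; omega⟩
  vt_mem := fun a ha => t.vt_mem a ⟨ha.1, by have := ha.2; omega⟩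
  vt'_mem := fun a ha => t.vt'_mem a ⟨ha.1, by have := ha.2; omega⟩
  vt_ne := fun a ha => t.vt_ne a ⟨ha.1, by have := ha.2; omega⟩
  seg_adj := fun a ha => t.seg_adj a ⟨ha.1, by have := ha.2; omega⟩
  inter_seg := fun a ha b hb => t.inter_seg a ⟨ha.1, by have := ha.2; omega⟩ b
    ⟨hb.1, by have := hb.2; omega⟩
  w_eq_of_k_ge_two := fun h => by unfold auxX; rw [if_neg (by omega)]
  w_eq_of_k_eq_one := fun h => by unfold auxX; rw [if_pos h]
  w_mem := (aux_pmem _ _ _).2 ⟨i, h1, le_rfl, auxX_mem t i h1 hk.le⟩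
  uT_not_mem := by
    intro h
    obtain ⟨j, hj1, hji, hj⟩ := (aux_pmem _ _ _).1 h
    have := aux_uniq t hj1 (by omega) (by omega) hk hj (t.vt_mem (i + 1) ⟨by omega, hk⟩)
    omega
  w_adj_uT := (aux_link_s14 t i (i + 1) h1 (by omega) hk _ _ (auxX_mem t i h1 hk.le)
    (t.vt_mem (i + 1) ⟨by omega, hk⟩)).2 ⟨rfl, rfl, rfl⟩
  w_unique_out := by
    intro b hab hb
    rcases aux_step t i h1 hk i h1 le_rfl _ b (auxX_mem t i h1 hk.le) hab with h | h
    · exact absurd ((aux_pmem _ _ _).2 h) hb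
    · exact h.2
  others_in := by
    intro a ha hne b hab
    obtain ⟨l, hl1, hli, hl⟩ := (aux_pmem _ _ _).1 ha
    rcases aux_step t i h1 hk l hl1 hli _ b hl hab with h | h
    · exact (aux_pmem _ _ _).2 h
    · exact absurd h.1 hne

theorem aux_cut {V : Type*} {G : SimpleGraph V} {d : ℕ} (t : Tail G d) (a b : V)
    (hab : G.Adj a b) (ha : a ∈ t.carrier) (hb : b ∉ t.carrier) : a = t.w ∧ b = t.uT := by
  have : a = t.w := by
    by_contra h
    exact hb (t.others_in a ha h b hab)
  subst this
  exact ⟨rfl, t.w_unique_out b hab hb⟩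

theorem aux_main {V : Type*} [Finite V] {G : SimpleGraph V} {d : ℕ} (hd : 6 < d)
    (hconn : G.Connected) (hreg : IsRegularGraph G d) (hsnake : ¬ IsSnake G d)
    (t t' : Tail G d) (ht : IsProperTail G d t) (ht' : IsProperTail G d t')
    (x : V) (hx : x ∈ t.carrier) (hx' : x ∈ t'.carrier) : t.carrier = t'.carrier := by
  have hseg := aux_seg hd hreg t t'.carrier t'.w t'.uT (aux_cut t')
  by_cases hall : ∀ i, 1 ≤ i → i < t.k →
      (t.seg i ⊆ t'.carrier ↔ t.seg (i + 1) ⊆ t'.carrier)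
  · have hst : ∀ i, 1 ≤ i → i ≤ t.k → (t.seg i ⊆ t'.carrier ↔ t.seg 1 ⊆ t'.carrier) := by
      intro i hi
      induction i, hi using Nat.le_induction with
      | base => intro _; rfl
      | succ n hn ih => intro h; rw [← hall n hn (by omega), ih (by omega)]
    apply ht
    obtain ⟨i, hi1, hik, hxi⟩ := (aux_mem t x).1 hx
    have hi : t.seg i ⊆ t'.carrier := by
      rcases hseg i hi1 hik with h | h
      · exact h
      · exact absurd hx' (h hxi)
    intro y hy
    obtain ⟨j, hj1, hjk, hyj⟩ := (aux_mem t y).1 hy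
    exact (hst j hj1 hjk).2 ((hst i hi1 hik).1 hi) hyj
  · exfalso
    push Not at hall
    obtain ⟨i, hi1, hik, hne⟩ := hall
    let P := auxPre t i hi1 hik
    have hadj : G.Adj P.w P.uT := P.w_adj_uT
    have hxm : P.w ∈ t.seg i := auxX_mem t i hi1 hik.le
    have hym : P.uT ∈ t.seg (i + 1) := t.vt_mem (i + 1) ⟨by omega, hik⟩
    have hcutP := aux_cut P
    have hcutS := aux_cut t'
    have hcase : (P.w ∈ t'.carrier ∧ P.uT ∉ t'.carrier) ∨
        (P.w ∉ t'.carrier ∧ P.uT ∈ t'.carrier) := by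
      rcases hseg i hi1 hik.le with h | h <;> rcases hseg (i + 1) (by omega) hik with h' | h'
      · exact absurd hne (by tauto)
      · exact Or.inl ⟨h hxm, h' hym⟩
      · exact Or.inr ⟨h hxm, h' hym⟩
      · rcases hne with hne | hne
        · exact absurd (hne.1 hxm) (h hxm)
        · exact absurd (hne.2 hym) (h' hym)
    have hwP := P.w_mem
    have huP := P.uT_not_mem
    rcases hcase with ⟨hw, hu⟩ | ⟨hw, hu⟩
    · obtain ⟨e1, e2⟩ := hcutS _ _ hadj hw hu
      have hZ : ∀ y, y ∈ {y | y ∈ P.carrier ↔ y ∈ t'.carrier} := by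
        refine aux_conn_s14 hconn _ ?_ (x := P.w) (by simp only [Set.mem_ofPred_eq]; tauto)
        intro a b hab ha
        have q1 := hcutP a b hab
        have q2 := hcutP b a hab.symm
        have q3 := hcutS a b hab
        have q4 := hcutS b a hab.symm
        simp only [Set.mem_ofPred_eq] at ha ⊢
        rw [← e1, ← e2] at q3 q4
        grind
      have hsub : t'.carrier ⊆ t.carrier := by
        intro y hy
        obtain ⟨j, hj1, hji, hj⟩ := (aux_pmem _ _ _).1 ((hZ y).2 hy)
        exact (aux_mem t y).2 ⟨j, hj1, by omega, hj⟩
      have heq := ht' t hsub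
      rw [heq] at hu
      exact hu ((aux_mem t _).2 ⟨i + 1, by omega, hik, hym⟩)
    · obtain ⟨e1, e2⟩ := hcutS _ _ hadj.symm hu hw
      have hZ : ∀ y, y ∈ {y | y ∈ P.carrier ↔ y ∉ t'.carrier} := by
        refine aux_conn_s14 hconn _ ?_ (x := P.w) (by simp only [Set.mem_ofPred_eq]; tauto)
        intro a b hab ha
        have q1 := hcutP a b hab
        have q2 := hcutP b a hab.symm
        have q3 := hcutS a b hab
        have q4 := hcutS b a hab.symm
        simp only [Set.mem_ofPred_eq] at ha ⊢
        rw [← e1, ← e2] at q3 q4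
        grind
      refine hsnake ⟨hconn, hreg, P, t', ?_, ?_, e1, e2.symm, ?_⟩
      · exact Set.disjoint_left.2 fun y hy => (hZ y).1 hy
      · ext y
        have := hZ y
        simp only [Set.mem_ofPred_eq] at this
        simp only [Set.mem_union, Set.mem_univ, iff_true]
        tauto
      · intro a ha b hb hab
        have hb' : b ∉ P.carrier := fun h => (hZ b).1 h hb
        have := hcutP a b hab ha hb'
        rw [← e1]
        exact this

/-- Let `d > 6` be odd, `G` connected `d`-regular with `G²` not complete
and not a snake graph. Let `R` (resp. `R'`) be the union of the maximal collection of all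
proper tails whose outside attachment vertex is `u₀` (resp. `u₀'`). If `R ∩ R' ≠ ∅`
then `R = R'`. -/
theorem stmt14 {V : Type*} [Fintype V] (G : SimpleGraph V) (d : ℕ) (hd : 6 < d)
    (hodd : Odd d) (hconn : G.Connected) (hreg : IsRegularGraph G d)
    (hnotcomplete : graphSquare G ≠ ⊤) (hsnake : ¬ IsSnake G d)
    (u₀ u₀' : V) (R R' : Set V)
    (hR : R = ⋃₀ {S | ∃ t : Tail G d, IsProperTail G d t ∧ t.uT = u₀ ∧ S = t.carrier})
    (hR' : R' = ⋃₀ {S | ∃ t : Tail G d, IsProperTail G d t ∧ t.uT = u₀' ∧ S = t.carrier})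
    (hmeet : (R ∩ R').Nonempty) :
    R = R' := by
  subst hR hR'
  obtain ⟨x, ⟨S, ⟨t, ht, hu, rfl⟩, hx⟩, ⟨S', ⟨t', ht', hu', rfl⟩, hx'⟩⟩ := hmeet
  have he := aux_main hd hconn hreg hsnake t t' ht ht' x hx hx'
  have h := aux_cut t' t.w t.uT t.w_adj_uT (he ▸ t.w_mem) (he ▸ t.uT_not_mem)
  have : u₀ = u₀' := by rw [← hu, ← hu', h.2]
  rw [this]
end

section
/- Let G be a connected d-regular graph. There is no vertex y of G such that deg₂(y) = 3, N₂'(y) = {x} for some vertex x, and x has exactly one neighbor in the connected component of G − x containing y. (Equivalently: if deg₂(y) = 3 and |N₂'(y)| = 1 with N₂'(y) = {x}, then x has at least two neighbors in the component of G − x containing y.) -/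
open SimpleGraph

variable {V : Type*}

/-- Let `G` be a connected `d`-regular graph. There is no vertex `y` with
`deg₂(y) = 3` and `N₂'(y) = {x}` such that `x` has exactly one neighbor in the connected
component of `G - x` containing `y`. -/
theorem stmt17 {V : Type*} [Fintype V] (G : SimpleGraph V) (d : ℕ)
    (hconn : G.Connected) (hreg : IsRegularGraph G d) :
    ¬ ∃ (y x : V), deg2 G y = 3 ∧ N2' G y = {x} ∧
      (G.neighborSet x ∩ compDel G x y).ncard = 1 := by
  classical
  rintro ⟨y, x, h2, hN, h1⟩
  have hx : G.dist y x = 2 := by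
    have : x ∈ N2' G y := by rw [hN]; rfl
    exact this.1
  have hfwd : ∀ (u w : V) (p : G.Walk u w), x ∉ p.support → G.dist y u ≤ 2 →
      G.dist y w ≤ 2 := by
    intro u w p
    induction p with
    | nil => intro _ h; exact h
    | @cons u v w hadj p ih =>
      intro hs hu
      rw [Walk.support_cons, List.mem_cons, not_or] at hs
      apply ih hs.2
      have ht : G.dist y v ≤ G.dist y u + G.dist u v := hconn.dist_triangle
      rw [SimpleGraph.dist_eq_one_iff_adj.2 hadj] at ht
      by_contra hc
      have : u ∈ N2' G y := ⟨by omega, v, by omega, hadj⟩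
      rw [hN] at this
      exact hs.1 this.symm
  have hclosed : ∀ v w, v ∈ compDel G x y → G.Adj v w → w ≠ x → w ∈ compDel G x y := by
    rintro v w ⟨p, hp⟩ ha hw
    refine ⟨p.concat ha, ?_⟩
    rw [Walk.support_concat]
    simp [hp, Ne.symm hw]
  have hyx : y ≠ x := by
    rintro rfl
    simp at hx
  have hy : y ∈ compDel G x y := ⟨Walk.nil, by simpa using hyx.symm⟩
  have hxS : x ∉ compDel G x y := by
    rintro ⟨p, hp⟩
    exact hp p.end_mem_support
  have hadjS : ∀ w, G.Adj y w → w ∈ compDel G x y := by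
    intro w hw
    refine hclosed y w hy hw ?_
    rintro rfl
    rw [SimpleGraph.dist_eq_one_iff_adj.2 hw] at hx
    omega
  have hS : compDel G x y = ({y} ∪ G.neighborSet y) ∪ (distSet G y 2 \ {x}) := by
    ext w
    constructor
    · intro hw
      have hwx : w ≠ x := by rintro rfl; exact hxS hw
      obtain ⟨p, hp⟩ := hw
      have := hfwd y w p hp (by simp)
      have h3 : G.dist y w = 0 ∨ G.dist y w = 1 ∨ G.dist y w = 2 := by omega
      rcases h3 with h | h | h
      · left; left
        exact ((hconn.dist_eq_zero_iff).1 h).symm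
      · left; right
        exact SimpleGraph.dist_eq_one_iff_adj.1 h
      · right
        exact ⟨h, hwx⟩
    · rintro ((h | h) | ⟨h, hwx⟩)
      · rw [Set.mem_singleton_iff.1 h]; exact hy
      · exact hadjS w h
      · obtain ⟨p, hp⟩ := hconn.exists_walk_length_eq_dist y w
        have hl : p.length = 2 := hp.trans h
        match p, hl with
        | .cons a (.cons b .nil), _ => exact hclosed _ _ (hadjS _ a) b hwx
  have hcard : (compDel G x y).ncard = d + 3 := by
    rw [hS, Set.ncard_union_eq, Set.ncard_union_eq, Set.ncard_singleton, hreg y,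
      Set.ncard_diff_singleton_of_mem (show x ∈ distSet G y 2 from hx)]
    · have : (distSet G y 2).ncard = 3 := h2
      omega
    · simp
    · rw [Set.disjoint_left]
      rintro w (h | h) ⟨h', -⟩
      · rw [Set.mem_singleton_iff.1 h] at h'
        simp [distSet] at h'
      · have h4 : G.dist y w = 1 := SimpleGraph.dist_eq_one_iff_adj.2 h
        have h5 : G.dist y w = 2 := h'
        omega
  generalize compDel G x y = S at *
  let H : SimpleGraph V :=
    { Adj := fun v w => G.Adj v w ∧ v ∈ S ∧ w ∈ S
      symm := ⟨fun v w h => ⟨h.1.symm, h.2.2, h.2.1⟩⟩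
      loopless := ⟨fun v h => G.loopless.irrefl v h.1⟩ }
  have hdeg : ∀ v, H.degree v + (if G.Adj x v ∧ v ∈ S then 1 else 0) =
      if v ∈ S then d else 0 := by
    intro v
    have hd : H.degree v = (H.neighborSet v).ncard := by
      rw [← SimpleGraph.card_neighborFinset_eq_degree, ← Set.ncard_coe_finset,
        SimpleGraph.coe_neighborFinset]
    rw [hd]
    by_cases hv : v ∈ S
    · by_cases ha : G.Adj x v
      · have : G.neighborSet v = insert x (H.neighborSet v) := by
          ext w
          simp only [SimpleGraph.mem_neighborSet, Set.mem_insert_iff, H]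
          constructor
          · intro hw
            by_cases hwx : w = x
            · exact Or.inl hwx
            · exact Or.inr ⟨hw, hv, hclosed v w hv hw hwx⟩
          · rintro (rfl | h)
            · exact ha.symm
            · exact h.1
        have hr := hreg v
        rw [this, Set.ncard_insert_of_notMem (fun h => hxS h.2.2)] at hr
        simp [hv, ha, hr]
      · have : G.neighborSet v = H.neighborSet v := by
          ext w
          simp only [SimpleGraph.mem_neighborSet, H]
          refine ⟨fun hw => ⟨hw, hv, hclosed v w hv hw ?_⟩, fun h => h.1⟩
          rintro rfl
          exact ha hw.symm
        have hr := hreg v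
        rw [this] at hr
        simp [hv, ha, hr]
    · have : H.neighborSet v = ∅ := by
        ext w
        simp [H, hv]
      simp [this, hv]
  have hsum := Finset.sum_congr (rfl : (Finset.univ : Finset V) = Finset.univ)
    (fun v _ => hdeg v)
  rw [Finset.sum_add_distrib, H.sum_degrees_eq_twice_card_edges, ← Finset.card_filter,
    ← Finset.sum_filter, Finset.sum_const, smul_eq_mul] at hsum
  have e1 : (Finset.univ.filter (fun v => G.Adj x v ∧ v ∈ S)).card = 1 := by
    rw [← h1, ← Set.ncard_coe_finset]
    congr 1
    ext w
    simp
  have e2 : (Finset.univ.filter (fun v => v ∈ S)).card = d + 3 := by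
    rw [← hcard, ← Set.ncard_coe_finset]
    congr 1
    ext w
    simp
  rw [e1, e2] at hsum
  have he : Even ((d + 3) * d) := by
    rcases Nat.even_or_odd d with h | h
    · exact h.mul_left _
    · exact (h.add_odd (by decide)).mul_right _
  obtain ⟨k, hk⟩ := he
  omega
end
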